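/- arXiv:1902.10970 — 3 statements merged into one kernel-verified Lean document; each statement's English description precedes it below -/
import Mathlib

section
/- Let m and n be integers with 2 ≤ m ≤ n/2, let B_r ⊂ ℝⁿ be the open ball of radius r > 0 centered at the origin. Then there exist positive constants a_{n,m} and b_{n,m}, depending only on n and m, such that for every β ≥ (n−m)/n, every R ≥ r, every c with 0 < c ≤ a_{n,m}, and every radial function u ∈ C₀^∞(B_r) with I_{n,m}[u,B_r,R] ≤ 1, one has ∫_{B_r} exp( c · ( |u(x)| / E₂(|x|/R)^β )^{n/(n−m)} ) dx ≤ b_{n,m} · |B_r|, where |B_r| denotes the Lebesgue measure of B_r. -/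
/-!
A radial function is determined by its profile `g` on a ray, and everything reduces to Hardy
inequalities in one variable. Put `p = n / m ≥ 2` and let `d_i` be the radial profile of `∇^i u`:
`d_{2k}` is the profile of `Δ^k u` and `d_{2k+1} = d_{2k}'`. The rescaled profiles
`W_i(y) = y^i d_i(y)` satisfy one uniform recursion, `W_{i+1} = y W_i' + σ_{i+1} W_i` with
`σ_i = n - i` for even `i` and `σ_i = 1 - i` for odd `i` (`radW_succ`). In polar coordinates
`∫ |∇^m u|^p` is a constant multiple of `∫ |W_m|^p dy / y`.

The tangent inequality for the convex function `|·|^p`, applied to `σ V + y V'`, bounds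
`|W_{i+1}|^p / y` from below by `|σ_{i+1}|^p |W_i|^p / y` plus an exact derivative
(`hardy_step`). Iterating on `[ε, r]` from `i = m` down to `i = 1` (`hardy_chain`) leaves boundary
terms which vanish as `ε → 0`, and the product of the constants is exactly `R_{n,m}`, up to the
factor `θ^p`, `θ = (p - 1) / p = (n - m) / n`, of the last, critical, step (`Rnm_eq`).

In the critical step, with `t = E₁(y / R)` and `g = t^θ h`, the tangent inequality is used with the
remainder `2^{1-p} |b|^p` (`abs_rpow_tangent_rem`), which is where `p ≥ 2` enters. The condition
`I ≤ 1` therefore bounds `∫ |h'|^p (y t)^{p-1} dy` by a constant. Since `h` vanishes at `r`, this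
gives the pointwise bound
`|g(x)| ≤ C (t(x) log (t(x) / t(r)))^θ` (`critical_step`, `profile_bound`).

Finally `t log (t / t(r)) ≤ 2 (t - t(r)) (1 + log t)` and `t(x) - t(r) = log (r / x)`, so after
division by `E₂^β` the exponent is at most `c C' log (r / |x|)` (`exponent_bound`). For small `c`
the integrand is at most `r / |x|`, whose integral over `B_r` is `n / (n - 1) |B_r|`.
-/

open MeasureTheory Real

/-- `E₁(t) = 1 - ln t`. -/
noncomputable def E1 (t : ℝ) : ℝ := 1 - Real.log t

/-- `E₂(t) = ln (e E₁(t)) = 1 + ln E₁(t)`. -/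
noncomputable def E2 (t : ℝ) : ℝ := 1 + Real.log (E1 t)

/-- The Euclidean Laplacian of a scalar function on `ℝⁿ`. -/
noncomputable def lap {n : ℕ} (f : EuclideanSpace ℝ (Fin n) → ℝ) :
    EuclideanSpace ℝ (Fin n) → ℝ := fun x =>
  ∑ i, fderiv ℝ (fun y => fderiv ℝ f y (EuclideanSpace.single i 1)) x (EuclideanSpace.single i 1)

/-- The constant `R_{n,m,p}`. -/
noncomputable def Rconst (n m : ℕ) (p : ℝ) : ℝ :=
  if Even m then
    ∏ j ∈ Finset.range (m / 2),
      (((n : ℝ) * (p - 1) + 2 * j * p) / p * (((n : ℝ) - 2 * (j + 1) * p) / p)) ^ p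
  else
    (((n : ℝ) - p) / p) ^ p *
      ∏ j ∈ Finset.range (m / 2),
        (((n : ℝ) * (p - 1) + p + 2 * j * p) / p * (((n : ℝ) - p - 2 * (j + 1) * p) / p)) ^ p

/-- The constant `R_{n,m} = ((n-2)(n-m)/n)^{n/m} R_{n,m-2,n/m}`. -/
noncomputable def Rnm (n m : ℕ) : ℝ :=
  (((n : ℝ) - 2) * ((n : ℝ) - m) / n) ^ ((n : ℝ) / m) * Rconst n (m - 2) ((n : ℝ) / m)

/-- `|∇^m f|`: the norm of `Δ^{m/2} f` for even `m`, of `∇ Δ^{(m-1)/2} f` for odd `m`. -/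
noncomputable def nablaPowNorm {n : ℕ} (m : ℕ) (f : EuclideanSpace ℝ (Fin n) → ℝ)
    (x : EuclideanSpace ℝ (Fin n)) : ℝ :=
  if Even m then |lap^[m / 2] f x| else ‖gradient (lap^[m / 2] f) x‖

/-- `I_{n,m}[u, Ω, R]`. -/
noncomputable def Inm (n m : ℕ) (Ω : Set (EuclideanSpace ℝ (Fin n))) (R : ℝ)
    (u : EuclideanSpace ℝ (Fin n) → ℝ) : ℝ :=
  (∫ x in Ω, (nablaPowNorm m u x) ^ ((n : ℝ) / m)) -
    Rnm n m * ∫ x in Ω, |u x| ^ ((n : ℝ) / m) / (‖x‖ ^ n * (E1 (‖x‖ / R)) ^ ((n : ℝ) / m))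

/-! ### Inequalities for `|·| ^ p` with `p ≥ 2` -/

theorem abs_rpow_sub_two_mul_self {p : ℝ} (hp : 2 ≤ p) (a : ℝ) :
    |a| ^ (p - 2) * a * a = |a| ^ p := by
  rcases eq_or_ne a 0 with rfl | ha
  · rw [abs_zero, Real.zero_rpow (by linarith : p ≠ 0)]; ring
  · have h : 0 < |a| := abs_pos.2 ha
    have h2 : a * a = |a| ^ (2 : ℝ) := by
      rw [Real.rpow_two, sq_abs, sq]
    rw [mul_assoc, h2, ← Real.rpow_add h]; ring_nf

/-- The graph of the convex function `|·| ^ p` lies above its tangent at `a`. This is Young's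
inequality for the product `|a + b| * |a| ^ (p - 1)`. -/
theorem abs_rpow_tangent {p : ℝ} (hp : 2 ≤ p) (a b : ℝ) :
    |a| ^ p + p * (|a| ^ (p - 2) * a) * b ≤ |a + b| ^ p := by
  have hp0 : (0 : ℝ) < p := by linarith
  have hp1 : (0 : ℝ) < p - 1 := by linarith
  have hq : p.HolderConjugate (p / (p - 1)) := Real.HolderConjugate.conjExponent (by linarith)
  have hy := Real.young_inequality_of_nonneg (abs_nonneg (a + b))
    (Real.rpow_nonneg (abs_nonneg a) (p - 1)) hq
  rw [← Real.rpow_mul (abs_nonneg a), mul_div_cancel₀ _ hp1.ne'] at hy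
  have e1 : |a| ^ (p - 1) = |a| ^ (p - 2) * |a| := by
    rcases eq_or_ne a 0 with rfl | ha
    · rw [abs_zero, Real.zero_rpow hp1.ne', mul_zero]
    · rw [← Real.rpow_add_one (abs_pos.2 ha).ne']; ring_nf
  have h1 : |a| ^ (p - 2) * a * (a + b) ≤ |a + b| * |a| ^ (p - 1) := by
    rw [e1]
    calc |a| ^ (p - 2) * a * (a + b) ≤ |a| ^ (p - 2) * |a * (a + b)| := by
          rw [mul_assoc]
          exact mul_le_mul_of_nonneg_left (le_abs_self _) (Real.rpow_nonneg (abs_nonneg a) _)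
      _ = _ := by rw [abs_mul]; ring
  have h2 := abs_rpow_sub_two_mul_self hp a
  have h3 : p * (|a + b| ^ p / p + |a| ^ p / (p / (p - 1))) = |a + b| ^ p + (p - 1) * |a| ^ p := by
    field_simp
  have h4 := mul_le_mul_of_nonneg_left (h1.trans hy) hp0.le
  rw [h3] at h4
  nlinarith

/-- Clarkson's inequality on the real line: superadditivity, then convexity, of `s ↦ s ^ (p / 2)`
applied to the squares. -/
theorem clarkson_real {p : ℝ} (hp : 2 ≤ p) (x y : ℝ) :
    2 * |x| ^ p + 2 * |y| ^ p ≤ |x + y| ^ p + |x - y| ^ p := by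
  have key : ∀ z : ℝ, |z| ^ p = (z ^ 2) ^ (p / 2) := fun z => by
    rw [← sq_abs, ← Real.rpow_natCast, ← Real.rpow_mul (abs_nonneg z)]
    congr 1; push_cast; ring
  have hp2 : 1 ≤ p / 2 := by linarith
  have h1 := Real.add_rpow_le_rpow_add (sq_nonneg x) (sq_nonneg y) hp2
  have h2 := (convexOn_rpow hp2).2 (sq_nonneg (x + y)) (sq_nonneg (x - y))
    (by norm_num : (0 : ℝ) ≤ 1 / 2) (by norm_num : (0 : ℝ) ≤ 1 / 2) (by norm_num)
  simp only [smul_eq_mul] at h2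
  rw [show 1 / 2 * (x + y) ^ 2 + 1 / 2 * (x - y) ^ 2 = x ^ 2 + y ^ 2 by ring] at h2
  simp only [key]
  linarith

/-- The tangent inequality for `|·| ^ p` with a remainder of order `|b| ^ p`: the tangent inequality
at the midpoint `a + b / 2` combined with Clarkson's inequality. -/
theorem abs_rpow_tangent_rem {p : ℝ} (hp : 2 ≤ p) (a b : ℝ) :
    |a| ^ p + p * (|a| ^ (p - 2) * a) * b + 2 ^ (1 - p) * |b| ^ p ≤ |a + b| ^ p := by
  have h1 := abs_rpow_tangent hp a (b / 2)
  have h2 := clarkson_real hp (a + b / 2) (b / 2)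
  rw [show a + b / 2 + b / 2 = a + b by ring, show a + b / 2 - b / 2 = a by ring] at h2
  have h3 : 2 * |b / 2| ^ p = 2 ^ (1 - p) * |b| ^ p := by
    rw [abs_div, abs_two, Real.div_rpow (abs_nonneg b) (by norm_num),
      Real.rpow_sub (by norm_num), Real.rpow_one]
    ring
  linarith

/-! ### Hardy inequalities on `[ε, r]` -/

/-- One-dimensional Hardy inequality on `[ε, r]` for the first-order operator `V ↦ y V' + σ V`,
with its boundary term at `ε`. The cross term in the tangent inequality at `σ V` is a multiple of
`(|V| ^ p)'`, hence integrates exactly. -/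
theorem hardy_step {p σ ε r : ℝ} (hp : 2 ≤ p) (hε : 0 < ε) (her : ε ≤ r)
    {W V V' : ℝ → ℝ} (hW : Continuous W) (hV : ∀ y, HasDerivAt V (V' y) y) (hV' : Continuous V')
    (hVr : V r = 0) (hWV : ∀ y, 0 < y → W y = y * V' y + σ * V y) :
    |σ| ^ p * (∫ y in ε..r, |V y| ^ p / y) - |σ| ^ (p - 2) * σ * |V ε| ^ p ≤
      ∫ y in ε..r, |W y| ^ p / y := by
  have hp0 : 0 ≤ p := by linarith
  have hVc : Continuous V := continuous_iff_continuousAt.2 fun y => (hV y).continuousAt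
  have hpos : ∀ y ∈ Set.uIcc ε r, 0 < y := fun y hy => by
    rw [Set.uIcc_of_le her] at hy; linarith [hy.1]
  have hcW : ∀ F : ℝ → ℝ, Continuous F →
      IntervalIntegrable (fun y => |F y| ^ p / y) volume ε r := fun F hF =>
    ContinuousOn.intervalIntegrable
      (((hF.abs.rpow_const fun _ => Or.inr hp0).continuousOn).div continuousOn_id
        fun y hy => (hpos y hy).ne')
  have hd : ∀ y, HasDerivAt (fun y => |V y| ^ p) (p * |V y| ^ (p - 2) * V y * V' y) y :=
    fun y => (hasDerivAt_abs_rpow (V y) (by linarith)).comp y (hV y)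
  have hdc : Continuous fun y => p * |V y| ^ (p - 2) * V y * V' y :=
    ((continuous_const.mul (hVc.abs.rpow_const fun _ => Or.inr (by linarith))).mul hVc).mul hV'
  have hint : ∫ y in ε..r, p * |V y| ^ (p - 2) * V y * V' y = 0 - |V ε| ^ p := by
    rw [intervalIntegral.integral_eq_sub_of_hasDerivAt (fun y _ => hd y)
      (hdc.intervalIntegrable _ _), hVr, abs_zero, Real.zero_rpow (by linarith)]
  have hmono : ∫ y in ε..r, (|σ| ^ p * (|V y| ^ p / y) +
      |σ| ^ (p - 2) * σ * (p * |V y| ^ (p - 2) * V y * V' y)) ≤ ∫ y in ε..r, |W y| ^ p / y := by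
    refine intervalIntegral.integral_mono_on her
      (((hcW V hVc).const_mul _).add ((hdc.intervalIntegrable _ _).const_mul _)) (hcW W hW) ?_
    intro y hy
    have hy0 : 0 < y := by linarith [hy.1]
    have h := abs_rpow_tangent hp (σ * V y) (y * V' y)
    rw [add_comm (σ * V y), ← hWV y hy0, abs_mul, Real.mul_rpow (abs_nonneg _) (abs_nonneg _),
      Real.mul_rpow (abs_nonneg _) (abs_nonneg _)] at h
    rw [le_div_iff₀ hy0]
    refine le_trans (le_of_eq ?_) h
    field_simp
  rw [intervalIntegral.integral_add ((hcW V hVc).const_mul _)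
    ((hdc.intervalIntegrable _ _).const_mul _), intervalIntegral.integral_const_mul,
    intervalIntegral.integral_const_mul, hint] at hmono
  linarith

/-- A form of Young's inequality with a free parameter `μ`, which replaces Hölder's inequality in
`critical_step`. -/
theorem le_rpow_div_add {p z μ : ℝ} (hp : 2 ≤ p) (hz : 0 ≤ z) (hμ : 0 < μ) :
    z ≤ μ ^ (1 - p) * z ^ p + μ := by
  rcases le_total z μ with h | h
  · have : 0 ≤ μ ^ (1 - p) * z ^ p := by positivity
    linarith
  · have hz0 : 0 < z := hμ.trans_le h
    have h1 : z ^ (1 - p) ≤ μ ^ (1 - p) := Real.rpow_le_rpow_of_nonpos hμ h (by linarith)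
    have h2 : z = z ^ (1 - p) * z ^ p := by
      rw [← Real.rpow_add hz0]; simp
    have h3 : z ^ (1 - p) * z ^ p ≤ μ ^ (1 - p) * z ^ p := by gcongr
    linarith


theorem hasDerivAt_E1_div {R y : ℝ} (hR : 0 < R) (hy : 0 < y) :
    HasDerivAt (fun y => E1 (y / R)) (-1 / y) y := by
  have h := ((hasDerivAt_id y).div_const R).log (by simp only [id]; positivity)
  have h2 := h.const_sub 1
  refine h2.congr_deriv ?_
  simp only [id]
  field_simp

theorem one_le_E1_div {R y : ℝ} (hR : 0 < R) (hy : 0 < y) (hyR : y ≤ R) : 1 ≤ E1 (y / R) := by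
  have : Real.log (y / R) ≤ 0 := Real.log_nonpos (by positivity) (by rwa [div_le_one hR])
  unfold E1; linarith

/-- The critical Hardy inequality with remainder, turned into a pointwise bound. If the deficit
of the critical Hardy inequality on `[ε, r]` is at most `M`, then `h = E1 (y / R) ^ (-θ) * g` satisfies
`∫ |h'| ^ p (y t) ^ (p - 1) ≤ 2 ^ (p - 1) * M` with `t = E1 (y / R)`, and integrating `h'` from
`x` to `r`, where `h` vanishes, bounds `h x`. The estimate does not depend on `ε`. -/
theorem critical_step {p θ r R M ε x : ℝ} (hp : 2 ≤ p) (hθ : θ = (p - 1) / p)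
    (hrR : r ≤ R) {g g' : ℝ → ℝ} (hg : ∀ y, HasDerivAt g (g' y) y)
    (hg' : Continuous g') (hgr : g r = 0) (hε : 0 < ε) (hεx : ε ≤ x) (hxr : x < r)
    (hM : (∫ y in ε..r, |y * g' y| ^ p / y) -
      θ ^ p * (∫ y in ε..r, |g y| ^ p / (y * E1 (y / R) ^ p)) ≤ M) :
    |g x| ≤ (2 ^ (p - 1) * M + 1) *
      (E1 (x / R) * Real.log (E1 (x / R) / E1 (r / R))) ^ θ := by
  have hp0 : 0 < p := by linarith
  have hx : 0 < x := by linarith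
  have hr : 0 < r := by linarith
  have hR : 0 < R := by linarith
  have hθ0 : 0 < θ := by rw [hθ]; exact div_pos (by linarith) hp0
  have hθp : θ * p = p - 1 := by rw [hθ]; field_simp
  have her : ε ≤ r := by linarith
  set t : ℝ → ℝ := fun y => E1 (y / R) with ht
  have htd : ∀ y ∈ Set.Icc ε r, HasDerivAt t (-1 / y) y := fun y hy =>
    hasDerivAt_E1_div hR (by linarith [hy.1])
  have ht1 : ∀ y ∈ Set.Icc ε r, 1 ≤ t y := fun y hy =>
    one_le_E1_div hR (by linarith [hy.1]) (by linarith [hy.2])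
  have htc : ContinuousOn t (Set.Icc ε r) := fun y hy => (htd y hy).continuousAt.continuousWithinAt
  have hgc : Continuous g := continuous_iff_continuousAt.2 fun y => (hg y).continuousAt
  set h : ℝ → ℝ := fun y => t y ^ (-θ) * g y with hh
  set h' : ℝ → ℝ := fun y => t y ^ (-θ) * g' y + θ * t y ^ (-θ - 1) * g y / y with hh'
  have hhd : ∀ y ∈ Set.Icc ε r, HasDerivAt h (h' y) y := fun y hy => by
    have hy0 : 0 < y := by linarith [hy.1]
    have h1 := ((htd y hy).rpow_const (p := -θ) (Or.inl (by linarith [ht1 y hy]))).mul (hg y)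
    refine h1.congr_deriv ?_
    simp only [hh']
    field_simp
    ring
  have hhc : ContinuousOn h (Set.Icc ε r) := fun y hy => (hhd y hy).continuousAt.continuousWithinAt
  have htr : ∀ s : ℝ, ContinuousOn (fun y => t y ^ s) (Set.Icc ε r) := fun s =>
    htc.rpow_const fun y hy => Or.inl (by linarith [ht1 y hy])
  have hid0 : ∀ y ∈ Set.Icc ε r, y ≠ 0 := fun y hy => by linarith [hy.1]
  have hh'c : ContinuousOn h' (Set.Icc ε r) :=
    ((htr _).mul hg'.continuousOn).add
      (((continuousOn_const.mul (htr _)).mul hgc.continuousOn).div continuousOn_id hid0)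
  -- The remainder density `|h'| ^ p (y t) ^ (p - 1)` is `|U| ^ p / (y t)`.
  set U : ℝ → ℝ := fun y => y * h' y * t y with hU
  have hUc : ContinuousOn U (Set.Icc ε r) := (continuousOn_id.mul hh'c).mul htc
  have hhr : h r = 0 := by simp [hh, hgr]
  have hAc : ContinuousOn (fun y => |y * g' y| ^ p / y) (Set.Icc ε r) :=
    (((continuous_id.mul hg').abs.rpow_const fun _ => Or.inr hp0.le).continuousOn).div
      continuousOn_id hid0
  have hBc : ContinuousOn (fun y => |g y| ^ p / (y * t y ^ p)) (Set.Icc ε r) :=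
    ((hgc.abs.rpow_const fun _ => Or.inr hp0.le).continuousOn).div
      (continuousOn_id.mul (htr p)) fun y hy => mul_ne_zero (hid0 y hy)
        (Real.rpow_pos_of_pos (by linarith [ht1 y hy]) _).ne'
  have hDc : ContinuousOn (fun y => |U y| ^ p / (y * t y)) (Set.Icc ε r) :=
    (hUc.abs.rpow_const fun _ _ => Or.inr hp0.le).div
      (continuousOn_id.mul htc) fun y hy => mul_ne_zero (hid0 y hy) (by linarith [ht1 y hy])
  have hEc : ContinuousOn (fun y => p * |h y| ^ (p - 2) * h y * h' y) (Set.Icc ε r) :=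
    ((continuousOn_const.mul (hhc.abs.rpow_const fun _ _ => Or.inr (by linarith))).mul hhc).mul hh'c
  have toInt : ∀ {a : ℝ} {F : ℝ → ℝ}, ε ≤ a → a ≤ r → ContinuousOn F (Set.Icc ε r) →
      IntervalIntegrable F volume a r := fun h1 h2 hF =>
    ContinuousOn.intervalIntegrable (by
      rw [Set.uIcc_of_le h2]; exact hF.mono (Set.Icc_subset_Icc h1 le_rfl))
  have hEint : ∫ y in ε..r, p * |h y| ^ (p - 2) * h y * h' y = 0 - |h ε| ^ p := by
    rw [intervalIntegral.integral_eq_sub_of_hasDerivAt (f := fun y => |h y| ^ p)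
      (fun y hy => ?_) (toInt le_rfl her hEc), hhr, abs_zero, Real.zero_rpow hp0.ne']
    rw [Set.uIcc_of_le her] at hy
    exact (hasDerivAt_abs_rpow (h y) (by linarith)).comp y (hhd y hy)
  have hpt : ∀ y ∈ Set.Icc ε r, θ ^ p * (|g y| ^ p / (y * t y ^ p)) -
      θ ^ (p - 1) * (p * |h y| ^ (p - 2) * h y * h' y) + 2 ^ (1 - p) * (|U y| ^ p / (y * t y))
      ≤ |y * g' y| ^ p / y := by
    intro y hy
    have hy0 : 0 < y := by linarith [hy.1]
    have hty : 0 < t y := by linarith [ht1 y hy]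
    -- `y g' = -θ g / t + t ^ θ (y h')`; the first summand is written through `h`, so that the
    -- powers of `t` cancel in the cross term, which becomes a multiple of `(|h| ^ p)'`.
    have key := abs_rpow_tangent_rem hp (-(θ * t y ^ (θ - 1)) * h y) (t y ^ θ * (y * h' y))
    have e0 : -(θ * t y ^ (θ - 1)) * h y + t y ^ θ * (y * h' y) = y * g' y := by
      have a1 : t y ^ (θ - 1) * t y ^ (-θ) = t y ^ (-1 : ℝ) := by
        rw [← Real.rpow_add hty]; ring_nf
      have a2 : t y ^ θ * t y ^ (-θ) = 1 := by
        rw [← Real.rpow_add hty]; simp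
      have a3 : t y ^ θ * t y ^ (-θ - 1) = t y ^ (-1 : ℝ) := by
        rw [← Real.rpow_add hty]; ring_nf
      simp only [hh, hh']
      have : -(θ * t y ^ (θ - 1)) * (t y ^ (-θ) * g y) +
        t y ^ θ * (y * (t y ^ (-θ) * g' y + θ * t y ^ (-θ - 1) * g y / y)) =
        -(θ * (t y ^ (θ - 1) * t y ^ (-θ)) * g y) + (t y ^ θ * t y ^ (-θ)) * (y * g' y)
          + θ * (t y ^ θ * t y ^ (-θ - 1)) * g y := by field_simp; ring
      rw [this, a1, a2, a3]; ring
    have e1 : |-(θ * t y ^ (θ - 1)) * h y| ^ p = θ ^ p * (|g y| ^ p / t y ^ p) := by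
      have : -(θ * t y ^ (θ - 1)) * h y = -(θ * (g y / t y)) := by
        have a1 : t y ^ (θ - 1) * t y ^ (-θ) = (t y)⁻¹ := by
          rw [← Real.rpow_add hty, ← Real.rpow_neg_one]; ring_nf
        simp only [hh]
        calc _ = -(θ * ((t y ^ (θ - 1) * t y ^ (-θ)) * g y)) := by ring
          _ = _ := by rw [a1]; ring
      rw [this, abs_neg, abs_mul, abs_of_pos hθ0, abs_div, abs_of_pos hty,
        Real.mul_rpow hθ0.le (by positivity), Real.div_rpow (abs_nonneg _) hty.le]
    have e2 : p * (|-(θ * t y ^ (θ - 1)) * h y| ^ (p - 2) * (-(θ * t y ^ (θ - 1)) * h y)) *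
        (t y ^ θ * (y * h' y)) = -(θ ^ (p - 1) * (p * |h y| ^ (p - 2) * h y * (y * h' y))) := by
      have hc : 0 < θ * t y ^ (θ - 1) := by positivity
      rw [abs_mul, abs_neg, abs_of_pos hc, Real.mul_rpow hc.le (abs_nonneg _)]
      have a1 : (θ * t y ^ (θ - 1)) ^ (p - 2) * (θ * t y ^ (θ - 1)) * t y ^ θ = θ ^ (p - 1) := by
        have b1 : (θ * t y ^ (θ - 1)) ^ (p - 2) * (θ * t y ^ (θ - 1)) =
            (θ * t y ^ (θ - 1)) ^ (p - 1) := by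
          rw [← Real.rpow_add_one hc.ne']; ring_nf
        rw [b1, Real.mul_rpow hθ0.le (by positivity), ← Real.rpow_mul hty.le, mul_assoc,
          ← Real.rpow_add hty, show (θ - 1) * (p - 1) + θ = θ * p - (p - 1) by ring, hθp]
        simp
      rw [← a1]; ring
    have e3 : |t y ^ θ * (y * h' y)| ^ p = |U y| ^ p / t y := by
      have b1 : t y ^ θ * (y * h' y) = t y ^ (θ - 1) * U y := by
        simp only [hU]
        rw [Real.rpow_sub hty, Real.rpow_one]; field_simp
      rw [b1, abs_mul, abs_of_pos (Real.rpow_pos_of_pos hty _),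
        Real.mul_rpow (by positivity) (abs_nonneg _), ← Real.rpow_mul hty.le,
        show (θ - 1) * p = -1 by linarith, Real.rpow_neg_one]
      ring
    rw [e0, e1, e2, e3] at key
    rw [le_div_iff₀ hy0]
    refine le_trans (le_of_eq ?_) key
    have : 0 < t y ^ p := by positivity
    field_simp
    ring
  have hmono := intervalIntegral.integral_mono_on her
    ((((toInt le_rfl her hBc).const_mul (θ ^ p)).sub
      ((toInt le_rfl her hEc).const_mul (θ ^ (p - 1)))).add
      ((toInt le_rfl her hDc).const_mul (2 ^ (1 - p)))) (toInt le_rfl her hAc) hpt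
  rw [intervalIntegral.integral_add (((toInt le_rfl her hBc).const_mul (θ ^ p)).sub
      ((toInt le_rfl her hEc).const_mul (θ ^ (p - 1))))
      ((toInt le_rfl her hDc).const_mul (2 ^ (1 - p))),
    intervalIntegral.integral_sub ((toInt le_rfl her hBc).const_mul (θ ^ p))
      ((toInt le_rfl her hEc).const_mul (θ ^ (p - 1))),
    intervalIntegral.integral_const_mul, intervalIntegral.integral_const_mul,
    intervalIntegral.integral_const_mul, hEint] at hmono
  have hhε : 0 ≤ θ ^ (p - 1) * |h ε| ^ p := by positivity
  have hDε : ∫ y in ε..r, |U y| ^ p / (y * t y) ≤ 2 ^ (p - 1) * M := by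
    have h1 : 2 ^ (1 - p) * ∫ y in ε..r, |U y| ^ p / (y * t y) ≤ M := by linarith
    have h2 : (2 : ℝ) ^ (p - 1) * 2 ^ (1 - p) = 1 := by
      rw [← Real.rpow_add (by norm_num)]; simp
    calc _ = 2 ^ (p - 1) * (2 ^ (1 - p) * ∫ y in ε..r, |U y| ^ p / (y * t y)) := by
          rw [← mul_assoc, h2, one_mul]
      _ ≤ _ := by gcongr
  have hD0 : ∀ y ∈ Set.Icc ε r, 0 ≤ |U y| ^ p / (y * t y) := fun y hy => by
    have := ht1 y hy
    have : 0 < y := by linarith [hy.1]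
    positivity
  have hDx : ∫ y in x..r, |U y| ^ p / (y * t y) ≤ 2 ^ (p - 1) * M := by
    refine le_trans ?_ hDε
    refine intervalIntegral.integral_mono_interval hεx hxr.le le_rfl ?_ (toInt le_rfl her hDc)
    filter_upwards [ae_restrict_mem measurableSet_Ioc] with y hy
    exact hD0 y ⟨hy.1.le, hy.2⟩
  have hxm : x ∈ Set.Icc ε r := ⟨hεx, hxr.le⟩
  have hrm : r ∈ Set.Icc ε r := ⟨her, le_rfl⟩
  have htx : t r < t x := by
    simp only [ht, E1]
    have : Real.log (x / R) < Real.log (r / R) :=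
      Real.log_lt_log (by positivity) (by gcongr)
    linarith
  have htr0 : 0 < t r := by linarith [ht1 r hrm]
  have htx0 : 0 < t x := htr0.trans htx
  set L := Real.log (t x / t r) with hL
  have hL0 : 0 < L := Real.log_pos (by rwa [one_lt_div htr0])
  have hLi : IntervalIntegrable (fun y => 1 / (y * t y)) volume x r :=
    toInt hεx hxr.le (continuousOn_const.div (continuousOn_id.mul htc)
      fun y hy => mul_ne_zero (hid0 y hy) (by linarith [ht1 y hy]))
  have hLint : ∫ y in x..r, 1 / (y * t y) = L := by
    rw [intervalIntegral.integral_eq_sub_of_hasDerivAt (f := fun y => -Real.log (t y))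
      (fun y hy => ?_) hLi]
    · rw [hL, Real.log_div htx0.ne' htr0.ne']; ring
    · rw [Set.uIcc_of_le hxr.le] at hy
      have hy' : y ∈ Set.Icc ε r := ⟨hεx.trans hy.1, hy.2⟩
      have hy0 : 0 < y := by linarith [hy.1]
      refine ((htd y hy').log (by linarith [ht1 y hy'])).neg.congr_deriv ?_
      field_simp
  -- This choice of `μ` gives both `μ ^ (1 - p)` and `μ * L` the value `L ^ θ`.
  set μ := L ^ (-(1 / p)) with hμ
  have hμ0 : 0 < μ := Real.rpow_pos_of_pos hL0 _
  have hhx : |h x| ≤ (2 ^ (p - 1) * M + 1) * L ^ θ := by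
    have h1 : ∫ y in x..r, h' y = - h x := by
      rw [intervalIntegral.integral_eq_sub_of_hasDerivAt (f := h) (fun y hy => ?_)
        (toInt hεx hxr.le hh'c), hhr, zero_sub]
      rw [Set.uIcc_of_le hxr.le] at hy
      exact hhd y ⟨hεx.trans hy.1, hy.2⟩
    have h2 : |h x| ≤ ∫ y in x..r, |h' y| := by
      rw [← abs_neg, ← h1]
      exact intervalIntegral.abs_integral_le_integral_abs hxr.le
    have h3 : ∫ y in x..r, |h' y| ≤
        ∫ y in x..r, (μ ^ (1 - p) * (|U y| ^ p / (y * t y)) + μ * (1 / (y * t y))) := by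
      refine intervalIntegral.integral_mono_on hxr.le (toInt hεx hxr.le hh'c.abs)
        (((toInt hεx hxr.le hDc).const_mul _).add (hLi.const_mul _)) fun y hy => ?_
      have hy' : y ∈ Set.Icc ε r := ⟨hεx.trans hy.1, hy.2⟩
      have hy0 : 0 < y := by linarith [hy.1]
      have hty : 0 < t y := by linarith [ht1 y hy']
      have k := le_rpow_div_add hp (abs_nonneg (U y)) hμ0
      have k2 : |h' y| = |U y| / (y * t y) := by
        simp only [hU, abs_mul, abs_of_pos hy0, abs_of_pos hty]
        field_simp
      rw [k2, div_le_iff₀ (by positivity)]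
      refine k.trans (le_of_eq ?_)
      field_simp
    rw [intervalIntegral.integral_add ((toInt hεx hxr.le hDc).const_mul _) (hLi.const_mul _),
      intervalIntegral.integral_const_mul, intervalIntegral.integral_const_mul, hLint] at h3
    have m1 : μ ^ (1 - p) = L ^ θ := by
      rw [hμ, ← Real.rpow_mul hL0.le, hθ]; congr 1; field_simp; ring
    have m2 : μ * L = L ^ θ := by
      rw [hμ, ← Real.rpow_add_one hL0.ne', hθ]; congr 1; field_simp; ring
    rw [m1, m2] at h3
    have h4 : L ^ θ * ∫ y in x..r, |U y| ^ p / (y * t y) ≤ L ^ θ * (2 ^ (p - 1) * M) := by gcongr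
    linarith
  have hgx : g x = t x ^ θ * h x := by
    simp only [hh]
    rw [← mul_assoc, ← Real.rpow_add htx0]; simp
  rw [hgx, abs_mul, abs_of_pos (Real.rpow_pos_of_pos htx0 _), Real.mul_rpow htx0.le hL0.le]
  calc _ ≤ t x ^ θ * ((2 ^ (p - 1) * M + 1) * L ^ θ) := by gcongr
    _ = _ := by ring

/-- Iteration of `hardy_step` along a sequence `W` linked by first-order operators. The boundary terms
are collected in `err`, which tends to `0` because `W i 0 = 0` for every index `i ≥ 1` reached. -/
theorem hardy_chain {p r : ℝ} (hp : 2 ≤ p) {σ : ℕ → ℝ} {W : ℕ → ℝ → ℝ}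
    (hW : ∀ i, ContDiff ℝ 1 (W i)) (hWr : ∀ i, W i r = 0) (hW0 : ∀ i, 1 ≤ i → W i 0 = 0)
    (hrec : ∀ i y, 0 < y → W (i + 1) y = y * deriv (W i) y + σ (i + 1) * W i y) (m s : ℕ)
    (hs : s + 1 ≤ m) :
    ∃ err : ℝ → ℝ, Filter.Tendsto err (nhds 0) (nhds 0) ∧ ∀ ε, 0 < ε → ε ≤ r →
      (∏ j ∈ Finset.range s, |σ (m - j)| ^ p) * (∫ y in ε..r, |W (m - s) y| ^ p / y) - err ε ≤
        ∫ y in ε..r, |W m y| ^ p / y := by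
  induction s with
  | zero => exact ⟨fun _ => 0, tendsto_const_nhds, fun ε _ _ => by simp⟩
  | succ s ih =>
    obtain ⟨err, herr, h⟩ := ih (by omega)
    obtain ⟨i, hi⟩ : ∃ i, m - s = i + 1 := ⟨m - s - 1, by omega⟩
    have hi1 : 1 ≤ i := by omega
    have hi' : m - (s + 1) = i := by omega
    set P := ∏ j ∈ Finset.range s, |σ (m - j)| ^ p with hP
    have hP0 : 0 ≤ P := Finset.prod_nonneg fun j _ => by positivity
    refine ⟨fun ε => err ε + P * (|σ (i + 1)| ^ (p - 2) * σ (i + 1) * |W i ε| ^ p), ?_, ?_⟩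
    · have hc : Continuous fun ε => P * (|σ (i + 1)| ^ (p - 2) * σ (i + 1) * |W i ε| ^ p) :=
        continuous_const.mul (continuous_const.mul
          ((hW i).continuous.abs.rpow_const fun _ => Or.inr (by linarith)))
      have h0 := hc.tendsto 0
      simp only [hW0 i hi1, abs_zero, Real.zero_rpow (by linarith : p ≠ 0), mul_zero] at h0
      simpa using herr.add h0
    · intro ε hε her
      have h1 := h ε hε her
      have h2 := hardy_step (σ := σ (i + 1)) (W := W (i + 1)) (V := W i) (V' := deriv (W i))
        hp hε her (hW _).continuous
        (fun y => ((hW i).differentiable one_ne_zero y).hasDerivAt)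
        ((hW i).continuous_deriv le_rfl) (hWr i) (hrec i)
      rw [hi] at h1
      rw [Finset.prod_range_succ, ← hP, hi', hi]
      have h3 := mul_le_mul_of_nonneg_left h2 hP0
      linarith

/-! ### The constant `R_{n,m}` -/

/-- The coefficient `σ_i` in the recursion `W_i = y W_{i-1}' + σ_i W_{i-1}` satisfied by the rescaled
profiles `W_i = y ^ i d_i` of `∇^i u`: for odd `i` the function `d_i` is `d_{i-1}'`, for even `i` it
is `d_{i-1}' + (n - 1) / y * d_{i-1}`. -/
noncomputable def radCoef (n i : ℕ) : ℝ := if Even i then (n : ℝ) - i else 1 - i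

theorem prod_range_two_mul (f : ℕ → ℝ) (k : ℕ) :
    ∏ j ∈ Finset.range (2 * k), f j = ∏ j ∈ Finset.range k, f (2 * j) * f (2 * j + 1) := by
  induction k with
  | zero => simp
  | succ k ih =>
    rw [show 2 * (k + 1) = 2 * k + 1 + 1 by ring, Finset.prod_range_succ, Finset.prod_range_succ,
      ih, Finset.prod_range_succ, mul_assoc]

/-- `R_{n,m}` is the product of all the one-dimensional Hardy constants: `|σ_i| ^ p` for
`2 ≤ i ≤ m`, and `θ ^ p` for the critical step. -/
theorem Rnm_eq {n m : ℕ} (hm : 2 ≤ m) (hmn : 2 * m ≤ n) {p θ : ℝ} (hp : p = n / m)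
    (hθ : θ = (p - 1) / p) :
    Rnm n m = θ ^ p * ∏ j ∈ Finset.range (m - 1), |radCoef n (m - j)| ^ p := by
  have hm0 : (0 : ℝ) < m := by exact_mod_cast (by omega : 0 < m)
  have hmn' : (2 : ℝ) * m ≤ n := by exact_mod_cast hmn
  have hm2 : (2 : ℝ) ≤ m := by exact_mod_cast hm
  have hn0 : (0 : ℝ) < n := by linarith
  have hp0 : 0 < p := by rw [hp]; positivity
  have hθ' : θ = ((n : ℝ) - m) / n := by rw [hθ, hp]; field_simp
  have hθ0 : 0 < θ := by rw [hθ']; exact div_pos (by linarith) hn0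
  obtain ⟨l, rfl⟩ : ∃ l, m = l + 2 := ⟨m - 2, by omega⟩
  have hR : Rconst n l p = ∏ j ∈ Finset.range l, |radCoef n (l + 2 - j)| ^ p := by
    have hnp : (n : ℝ) = p * (l + 2) := by
      rw [hp]; push_cast; field_simp
    -- The `j`-th factor of `Rconst` is the product of the coefficients of two consecutive indices.
    rcases Nat.even_or_odd' l with ⟨k, rfl | rfl⟩
    · rw [Rconst, if_pos ⟨k, by ring⟩, prod_range_two_mul, show 2 * k / 2 = k by omega]
      refine Finset.prod_congr rfl fun j hj => ?_
      have hjk : j + 1 ≤ k := Finset.mem_range.1 hj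
      have hjk' : (j : ℝ) + 1 ≤ k := by exact_mod_cast hjk
      rw [← Real.mul_rpow (abs_nonneg _) (abs_nonneg _)]
      have e1 : 2 * k + 2 - 2 * j = 2 * (k + 1 - j) := by omega
      have e2 : 2 * k + 2 - (2 * j + 1) = 2 * (k - j) + 1 := by omega
      have c1 : ((k + 1 - j : ℕ) : ℝ) = k + 1 - j := by
        rw [Nat.cast_sub (by omega)]; push_cast; ring
      have c2 : ((k - j : ℕ) : ℝ) = k - j := by rw [Nat.cast_sub (by omega)]
      rw [e1, e2, radCoef, radCoef, if_pos ⟨_, two_mul _⟩,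
        if_neg (by rw [Nat.not_even_iff_odd]; exact ⟨_, rfl⟩)]
      push_cast at hmn' hnp ⊢
      rw [c1, c2, abs_of_nonneg (by linarith), abs_of_nonpos (by linarith)]
      congr 2
      · field_simp; rw [hnp]; ring
      · rw [hnp]; field_simp; ring
    · rw [Rconst, if_neg (by rw [Nat.not_even_iff_odd]; exact ⟨_, rfl⟩), Finset.prod_range_succ',
        prod_range_two_mul, show (2 * k + 1) / 2 = k by omega, mul_comm]
      congr 1
      · refine Finset.prod_congr rfl fun j hj => ?_
        have hjk : j + 1 ≤ k := Finset.mem_range.1 hj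
        have hjk' : (j : ℝ) + 1 ≤ k := by exact_mod_cast hjk
        rw [← Real.mul_rpow (abs_nonneg _) (abs_nonneg _)]
        have e1 : 2 * k + 1 + 2 - (2 * j + 1) = 2 * (k + 1 - j) := by omega
        have e2 : 2 * k + 1 + 2 - (2 * j + 1 + 1) = 2 * (k - j) + 1 := by omega
        have c1 : ((k + 1 - j : ℕ) : ℝ) = k + 1 - j := by
          rw [Nat.cast_sub (by omega)]; push_cast; ring
        have c2 : ((k - j : ℕ) : ℝ) = k - j := by rw [Nat.cast_sub (by omega)]
        rw [e1, e2, radCoef, radCoef, if_pos ⟨_, two_mul _⟩,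
          if_neg (by rw [Nat.not_even_iff_odd]; exact ⟨_, rfl⟩)]
        push_cast at hmn' hnp ⊢
        rw [c1, c2, abs_of_nonneg (by linarith), abs_of_nonpos (by linarith)]
        congr 2
        · field_simp; rw [hnp]; ring
        · rw [hnp]; field_simp; ring
      · rw [Nat.sub_zero, radCoef, if_neg (by rw [Nat.not_even_iff_odd]; exact ⟨k + 1, by ring⟩)]
        push_cast at hmn' hnp ⊢
        rw [abs_of_nonpos (by linarith)]
        congr 1
        rw [hnp]; field_simp; ring
  rw [Rnm, ← hp, show l + 2 - 2 = l by omega, hR, show l + 2 - 1 = l + 1 by omega,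
    Finset.prod_range_succ, show l + 2 - l = 2 by omega, radCoef, if_pos even_two,
    mul_div_assoc, ← hθ', Real.mul_rpow (by linarith) hθ0.le]
  push_cast
  rw [abs_of_nonneg (by linarith)]
  ring

/-! ### Radial functions and their iterated Laplacians -/

/-- A function on `ℝⁿ` is radial if its value at `x` depends only on `‖x‖`. -/
def IsRadial {n : ℕ} (f : EuclideanSpace ℝ (Fin n) → ℝ) : Prop :=
  ∀ x y, ‖x‖ = ‖y‖ → f x = f y

/-- The restriction of `f` to the first coordinate axis. It is defined on all of `ℝ`, so that it is
smooth across the origin when `f` is; for radial `f` one has `f x = profile f ‖x‖`. -/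
noncomputable def profile {n : ℕ} [NeZero n] (f : EuclideanSpace ℝ (Fin n) → ℝ) (s : ℝ) : ℝ :=
  f (EuclideanSpace.single 0 s)

theorem single_eq_smul_single {n : ℕ} [NeZero n] (s : ℝ) :
    EuclideanSpace.single (0 : Fin n) s = s • EuclideanSpace.single (0 : Fin n) (1 : ℝ) := by
  ext i
  by_cases h : i = 0 <;> simp [h]

theorem contDiff_profile {n : ℕ} [NeZero n] {f : EuclideanSpace ℝ (Fin n) → ℝ}
    (hf : ContDiff ℝ (⊤ : ℕ∞) f) : ContDiff ℝ (⊤ : ℕ∞) (profile f) := by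
  have h : profile f = fun s : ℝ => f (s • EuclideanSpace.single (0 : Fin n) (1 : ℝ)) := by
    funext s
    rw [profile, single_eq_smul_single]
  rw [h]
  exact hf.comp (contDiff_id.smul contDiff_const)

theorem IsRadial.eq_profile {n : ℕ} [NeZero n] {f : EuclideanSpace ℝ (Fin n) → ℝ}
    (hr : IsRadial f) (x : EuclideanSpace ℝ (Fin n)) : f x = profile f ‖x‖ :=
  hr _ _ (by simp)

theorem hasFDerivAt_norm' {n : ℕ} {x : EuclideanSpace ℝ (Fin n)} (hx : x ≠ 0) :
    HasFDerivAt (fun y => ‖y‖) (‖x‖⁻¹ • innerSL ℝ x) x := by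
  have h0 : 0 < ‖x‖ := norm_pos_iff.2 hx
  have h := (hasStrictFDerivAt_norm_sq x).hasFDerivAt.sqrt (by positivity)
  simp only [Real.sqrt_sq (norm_nonneg _)] at h
  refine h.congr_fderiv ?_
  ext v
  simp
  field_simp

theorem IsRadial.hasFDerivAt {n : ℕ} [NeZero n] {f : EuclideanSpace ℝ (Fin n) → ℝ}
    (hr : IsRadial f) (hf : ContDiff ℝ (⊤ : ℕ∞) f) {x : EuclideanSpace ℝ (Fin n)} (hx : x ≠ 0) :
    HasFDerivAt f ((deriv (profile f) ‖x‖ / ‖x‖) • innerSL ℝ x) x := by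
  have h1 : HasDerivAt (profile f) (deriv (profile f) ‖x‖) ‖x‖ :=
    ((contDiff_profile hf).differentiable (by simp) _).hasDerivAt
  have h2 := h1.comp_hasFDerivAt x (hasFDerivAt_norm' hx)
  have h3 : profile f ∘ (fun y => ‖y‖) = f := funext fun y => (hr.eq_profile y).symm
  rw [h3] at h2
  refine h2.congr_fderiv ?_
  rw [smul_smul, div_eq_mul_inv]

/-- The Laplacian of a radial function in polar coordinates. -/
theorem IsRadial.lap_eq {n : ℕ} [NeZero n] {f : EuclideanSpace ℝ (Fin n) → ℝ}
    (hr : IsRadial f) (hf : ContDiff ℝ (⊤ : ℕ∞) f) {x : EuclideanSpace ℝ (Fin n)} (hx : x ≠ 0) :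
    lap f x = deriv (deriv (profile f)) ‖x‖ + (n - 1) / ‖x‖ * deriv (profile f) ‖x‖ := by
  have h0 : 0 < ‖x‖ := norm_pos_iff.2 hx
  set g := profile f with hg
  have hgd : ContDiff ℝ (⊤ : ℕ∞) (deriv g) :=
    (contDiff_infty_iff_deriv.1 (contDiff_profile hf)).2
  have hq : HasDerivAt (fun s => deriv g s / s)
      ((deriv (deriv g) ‖x‖ * ‖x‖ - deriv g ‖x‖ * 1) / ‖x‖ ^ 2) ‖x‖ :=
    ((hgd.differentiable (by simp) _).hasDerivAt).div (hasDerivAt_id _) h0.ne'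
  have hqx := hq.comp_hasFDerivAt x (hasFDerivAt_norm' hx)
  have hterm : ∀ i : Fin n, fderiv ℝ (fun y => fderiv ℝ f y (EuclideanSpace.single i 1)) x
      (EuclideanSpace.single i 1) = deriv g ‖x‖ / ‖x‖ +
        x i ^ 2 * ((deriv (deriv g) ‖x‖ * ‖x‖ - deriv g ‖x‖) / ‖x‖ ^ 3) := by
    intro i
    have hev : (fun y => fderiv ℝ f y (EuclideanSpace.single i 1)) =ᶠ[nhds x]
        fun y => deriv g ‖y‖ / ‖y‖ * y i := by
      filter_upwards [isOpen_ne.mem_nhds hx] with y hy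
      rw [(hr.hasFDerivAt hf hy).fderiv]
      simp [EuclideanSpace.inner_single_right, hg]
    have hi : HasFDerivAt (fun y : EuclideanSpace ℝ (Fin n) => y i)
      (EuclideanSpace.proj i : EuclideanSpace ℝ (Fin n) →L[ℝ] ℝ) x :=
      (EuclideanSpace.proj i : EuclideanSpace ℝ (Fin n) →L[ℝ] ℝ).hasFDerivAt
    have h := hqx.mul hi
    rw [hev.fderiv_eq]
    have h' : HasFDerivAt (fun y : EuclideanSpace ℝ (Fin n) => deriv g ‖y‖ / ‖y‖ * y i) _ x := h
    rw [h'.fderiv]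
    simp [EuclideanSpace.inner_single_right]
    field_simp
  have hs : ∑ i, x i ^ 2 = ‖x‖ ^ 2 := by rw [EuclideanSpace.norm_sq_eq]; simp
  rw [lap, Finset.sum_congr rfl fun i _ => hterm i, Finset.sum_add_distrib, ← Finset.sum_mul, hs]
  simp
  field_simp
  ring

theorem contDiff_lap {n : ℕ} {f : EuclideanSpace ℝ (Fin n) → ℝ}
    (hf : ContDiff ℝ (⊤ : ℕ∞) f) : ContDiff ℝ (⊤ : ℕ∞) (lap f) := by
  have key : ∀ (F : EuclideanSpace ℝ (Fin n) → ℝ) (v : EuclideanSpace ℝ (Fin n)),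
      ContDiff ℝ (⊤ : ℕ∞) F → ContDiff ℝ (⊤ : ℕ∞) fun y => fderiv ℝ F y v := fun F v hF =>
    (contDiff_infty_iff_fderiv.1 hF).2.clm_apply contDiff_const
  exact ContDiff.sum fun i _ => key _ _ (key _ _ hf)

theorem IsRadial.lap {n : ℕ} [NeZero n] {f : EuclideanSpace ℝ (Fin n) → ℝ}
    (hr : IsRadial f) (hf : ContDiff ℝ (⊤ : ℕ∞) f) : IsRadial (lap f) := by
  intro x y hxy
  rcases eq_or_ne x 0 with rfl | hx
  · rw [norm_zero] at hxy
    rw [norm_eq_zero.1 hxy.symm]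
  · have hy : y ≠ 0 := by rwa [← norm_ne_zero_iff, ← hxy, norm_ne_zero_iff]
    rw [hr.lap_eq hf hx, hr.lap_eq hf hy, hxy]

theorem lap_eq_zero_on {n : ℕ} {f : EuclideanSpace ℝ (Fin n) → ℝ}
    {S : Set (EuclideanSpace ℝ (Fin n))} (hS : IsOpen S) (h : ∀ x ∈ S, f x = 0) :
    ∀ x ∈ S, lap f x = 0 := by
  have key : ∀ (F : EuclideanSpace ℝ (Fin n) → ℝ) (v : EuclideanSpace ℝ (Fin n)),
      (∀ x ∈ S, F x = 0) → ∀ x ∈ S, fderiv ℝ F x v = 0 := fun F v hF x hx => by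
    have : F =ᶠ[nhds x] fun _ => 0 := by
      filter_upwards [hS.mem_nhds hx] with y hy using hF y hy
    rw [this.fderiv_eq]; simp
  exact fun x hx => Finset.sum_eq_zero fun i _ => key _ _ (key _ _ h) x hx

/-- The three properties of `u` which its iterated Laplacians inherit: smoothness, radiality, and
vanishing off the support of `u`. -/
theorem lap_iterate {n : ℕ} [NeZero n] {u : EuclideanSpace ℝ (Fin n) → ℝ}
    (hr : IsRadial u) (hu : ContDiff ℝ (⊤ : ℕ∞) u) (k : ℕ) :
    ContDiff ℝ (⊤ : ℕ∞) (lap^[k] u) ∧ IsRadial (lap^[k] u) ∧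
      ∀ x ∈ (tsupport u)ᶜ, lap^[k] u x = 0 := by
  induction k with
  | zero => exact ⟨hu, hr, fun x hx => image_eq_zero_of_notMem_tsupport hx⟩
  | succ k ih =>
    rw [Function.iterate_succ_apply']
    exact ⟨contDiff_lap ih.1, ih.2.1.lap ih.1,
      lap_eq_zero_on (isClosed_tsupport u).isOpen_compl ih.2.2⟩

/-- The function `d_i`: the profile of `Δ^{i/2} u` for even `i`, the derivative of the profile of
`Δ^{(i-1)/2} u` for odd `i`. For radial `u`, its absolute value at `‖x‖` is `|∇^i u|` at `x ≠ 0`. -/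
noncomputable def radDer {n : ℕ} [NeZero n] (u : EuclideanSpace ℝ (Fin n) → ℝ) (i : ℕ) :
    ℝ → ℝ :=
  if Even i then profile (lap^[i / 2] u) else deriv (profile (lap^[i / 2] u))

theorem contDiff_radDer {n : ℕ} [NeZero n] {u : EuclideanSpace ℝ (Fin n) → ℝ}
    (hr : IsRadial u) (hu : ContDiff ℝ (⊤ : ℕ∞) u) (i : ℕ) :
    ContDiff ℝ (⊤ : ℕ∞) (radDer u i) := by
  have h := contDiff_profile (lap_iterate hr hu (i / 2)).1
  unfold radDer
  split_ifs
  · exact h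
  · exact (contDiff_infty_iff_deriv.1 h).2

theorem radDer_eq_zero {n : ℕ} [NeZero n] {u : EuclideanSpace ℝ (Fin n) → ℝ}
    (hr : IsRadial u) (hu : ContDiff ℝ (⊤ : ℕ∞) u) {r : ℝ} (hr0 : 0 < r)
    (hs : tsupport u ⊆ Metric.ball 0 r) (i : ℕ) : radDer u i r = 0 := by
  have hmem : EuclideanSpace.single (0 : Fin n) r ∈ (tsupport u)ᶜ := fun h => by
    have := hs h
    rw [mem_ball_zero_iff, PiLp.norm_single, Real.norm_of_nonneg hr0.le] at this
    exact lt_irrefl _ this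
  have hz := (lap_iterate hr hu (i / 2)).2.2
  unfold radDer
  split_ifs
  · exact hz _ hmem
  · have hc : Continuous fun s : ℝ => EuclideanSpace.single (0 : Fin n) s := by
      rw [show (fun s : ℝ => EuclideanSpace.single (0 : Fin n) s) =
        fun s => s • EuclideanSpace.single (0 : Fin n) (1 : ℝ) from funext single_eq_smul_single]
      fun_prop
    have : profile (lap^[i / 2] u) =ᶠ[nhds r] fun _ => 0 := by
      filter_upwards [hc.continuousAt.preimage_mem_nhds
        ((isClosed_tsupport u).isOpen_compl.mem_nhds hmem)] with s hs'
      exact hz _ hs'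
    rw [this.deriv_eq]; simp

/-- The recursion for the functions `d_i`: plain differentiation to an odd index, the radial divergence
`d' + (n - 1) / y * d` to an even one. -/
theorem radDer_succ {n : ℕ} [NeZero n] {u : EuclideanSpace ℝ (Fin n) → ℝ}
    (hr : IsRadial u) (hu : ContDiff ℝ (⊤ : ℕ∞) u) (i : ℕ) {y : ℝ} (hy : 0 < y) :
    radDer u (i + 1) y = deriv (radDer u i) y +
      (if Even (i + 1) then ((n : ℝ) - 1) / y * radDer u i y else 0) := by
  rcases Nat.even_or_odd' i with ⟨k, rfl | rfl⟩
  · have h1 : ¬ Even (2 * k + 1) := by rw [Nat.not_even_iff_odd]; exact ⟨_, rfl⟩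
    have h2 : Even (2 * k) := ⟨k, two_mul k⟩
    simp only [radDer, if_neg h1, if_pos h2, show (2 * k + 1) / 2 = k by omega,
      show 2 * k / 2 = k by omega, add_zero]
  · have h1 : ¬ Even (2 * k + 1) := by rw [Nat.not_even_iff_odd]; exact ⟨_, rfl⟩
    have h2 : Even (2 * k + 1 + 1) := ⟨k + 1, by ring⟩
    simp only [radDer, if_neg h1, if_pos h2, show (2 * k + 1) / 2 = k by omega,
      show (2 * k + 1 + 1) / 2 = k + 1 by omega]
    obtain ⟨a, b, -⟩ := lap_iterate hr hu k
    have hne : EuclideanSpace.single (0 : Fin n) y ≠ 0 := by simpa using hy.ne'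
    rw [Function.iterate_succ_apply', profile, b.lap_eq a hne, PiLp.norm_single,
      Real.norm_of_nonneg hy.le]

theorem nablaPowNorm_eq {n : ℕ} [NeZero n] {u : EuclideanSpace ℝ (Fin n) → ℝ}
    (hr : IsRadial u) (hu : ContDiff ℝ (⊤ : ℕ∞) u) (m : ℕ) {x : EuclideanSpace ℝ (Fin n)}
    (hx : x ≠ 0) : nablaPowNorm m u x = |radDer u m ‖x‖| := by
  obtain ⟨a, b, -⟩ := lap_iterate hr hu (m / 2)
  unfold nablaPowNorm radDer
  split_ifs
  · rw [b.eq_profile]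
  · have h0 : 0 < ‖x‖ := norm_pos_iff.2 hx
    rw [gradient, LinearIsometryEquiv.norm_map, (b.hasFDerivAt a hx).fderiv, norm_smul,
      innerSL_apply_norm, Real.norm_eq_abs, abs_div, abs_norm]
    field_simp

/-- The scale-invariant profile `W_i(y) = y ^ i d_i(y)`. -/
noncomputable def radW {n : ℕ} [NeZero n] (u : EuclideanSpace ℝ (Fin n) → ℝ) (i : ℕ) (y : ℝ) :
    ℝ := y ^ i * radDer u i y

theorem contDiff_radW {n : ℕ} [NeZero n] {u : EuclideanSpace ℝ (Fin n) → ℝ}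
    (hr : IsRadial u) (hu : ContDiff ℝ (⊤ : ℕ∞) u) (i : ℕ) : ContDiff ℝ 1 (radW u i) :=
  ((contDiff_id.pow i).mul (contDiff_radDer hr hu i)).of_le (by exact_mod_cast le_top)

/-- The factor `y ^ i` absorbs the `1 / y` term of the radial divergence, so that both parities obey the
same recursion. -/
theorem radW_succ {n : ℕ} [NeZero n] {u : EuclideanSpace ℝ (Fin n) → ℝ}
    (hr : IsRadial u) (hu : ContDiff ℝ (⊤ : ℕ∞) u) (i : ℕ) (y : ℝ) (hy : 0 < y) :
    radW u (i + 1) y = y * deriv (radW u i) y + radCoef n (i + 1) * radW u i y := by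
  have hd : HasDerivAt (radDer u i) (deriv (radDer u i) y) y :=
    ((contDiff_radDer hr hu i).differentiable (by simp) y).hasDerivAt
  have h : HasDerivAt (radW u i) _ y := (hasDerivAt_pow i y).mul hd
  have hp : y * (i * y ^ (i - 1)) = i * y ^ i := by
    rcases i with _ | i
    · simp
    · simp [pow_succ]; ring
  rw [h.deriv]
  have e : y * (i * y ^ (i - 1) * radDer u i y + y ^ i * deriv (radDer u i) y) =
      i * y ^ i * radDer u i y + y * y ^ i * deriv (radDer u i) y := by
    rw [← hp]; ring
  rw [e, radW, radW, radDer_succ hr hu i hy, radCoef]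
  split_ifs
  · push_cast
    field_simp
    ring
  · push_cast
    ring


/-! ### The pointwise bound and the exponential integral -/

/-- For `t ≤ 2 tr` the logarithm is at most `(t - tr) / tr`; for `t ≥ 2 tr` it is at most `log t`, and
`t ≤ 2 (t - tr)`. -/
theorem mul_log_le {t tr : ℝ} (htr : 1 ≤ tr) (h : tr ≤ t) :
    t * Real.log (t / tr) ≤ 2 * (t - tr) * (1 + Real.log t) := by
  have htr0 : 0 < tr := by linarith
  have ht0 : 0 < t := by linarith
  have hlt : 0 ≤ Real.log t := Real.log_nonneg (by linarith)
  rcases le_total t (2 * tr) with h2 | h2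
  · have h3 : Real.log (t / tr) ≤ (t - tr) / tr :=
      (Real.log_le_sub_one_of_pos (by positivity)).trans (le_of_eq (by field_simp))
    calc t * Real.log (t / tr) ≤ 2 * tr * ((t - tr) / tr) := by
          refine mul_le_mul h2 h3 (Real.log_nonneg ?_) (by positivity)
          rwa [one_le_div htr0]
      _ = 2 * (t - tr) * 1 := by field_simp
      _ ≤ _ := mul_le_mul_of_nonneg_left (by linarith) (by linarith)
  · have h3 : Real.log (t / tr) ≤ 1 + Real.log t := by
      rw [Real.log_div ht0.ne' htr0.ne']
      have := Real.log_nonneg htr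
      linarith
    calc t * Real.log (t / tr) ≤ t * (1 + Real.log t) := by gcongr
      _ ≤ _ := mul_le_mul_of_nonneg_right (by linarith) (by linarith)

/-- The bound on the Adams exponent. Both the loss `log t` in `mul_log_le` and the power `β ≥ θ` are
absorbed by `E2 = 1 + log t`; the result depends on `r` but not on `R`. -/
theorem exponent_bound {θ β r R C x v : ℝ} (hθ : 0 < θ) (hβ : θ ≤ β) (hC : 0 ≤ C) (hx : 0 < x)
    (hxr : x < r) (hrR : r ≤ R)
    (hv : |v| ≤ C * (E1 (x / R) * Real.log (E1 (x / R) / E1 (r / R))) ^ θ) :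
    (|v| / E2 (x / R) ^ β) ^ (1 / θ) ≤ C ^ (1 / θ) * (2 * Real.log (r / x)) := by
  have hr : 0 < r := by linarith
  have hR : 0 < R := by linarith
  set t := E1 (x / R) with ht
  set tr := E1 (r / R) with htr
  have htr1 : 1 ≤ tr := one_le_E1_div hR hr hrR
  have hdiff : t - tr = Real.log (r / x) := by
    rw [ht, htr, E1, E1, Real.log_div hx.ne' hR.ne', Real.log_div hr.ne' hR.ne',
      Real.log_div hr.ne' hx.ne']
    ring
  have hlog : 0 ≤ Real.log (r / x) := Real.log_nonneg (by rw [one_le_div hx]; exact hxr.le)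
  have hle : tr ≤ t := by linarith
  have hL : 0 ≤ Real.log (t / tr) :=
    Real.log_nonneg (by rw [one_le_div (by linarith)]; exact hle)
  have hE : E2 (x / R) = 1 + Real.log t := rfl
  have hE1 : 1 ≤ E2 (x / R) := by rw [hE]; linarith [Real.log_nonneg (htr1.trans hle)]
  have hE0 : 0 < E2 (x / R) := by linarith
  have hP : 0 ≤ t * Real.log (t / tr) := mul_nonneg (by linarith) hL
  have h1 : |v| / E2 (x / R) ^ β ≤ C * (t * Real.log (t / tr) / E2 (x / R)) ^ θ := by
    rw [Real.div_rpow hP hE0.le, ← mul_div_assoc]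
    have : E2 (x / R) ^ θ ≤ E2 (x / R) ^ β := Real.rpow_le_rpow_of_exponent_le hE1 hβ
    gcongr
  have hQ : 0 ≤ t * Real.log (t / tr) / E2 (x / R) := by positivity
  calc (|v| / E2 (x / R) ^ β) ^ (1 / θ)
      ≤ (C * (t * Real.log (t / tr) / E2 (x / R)) ^ θ) ^ (1 / θ) := by gcongr
    _ = C ^ (1 / θ) * (t * Real.log (t / tr) / E2 (x / R)) := by
        rw [Real.mul_rpow hC (by positivity), ← Real.rpow_mul hQ, mul_one_div_cancel hθ.ne',
          Real.rpow_one]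
    _ ≤ C ^ (1 / θ) * (2 * Real.log (r / x)) := by
        gcongr
        rw [div_le_iff₀ hE0, hE, ← hdiff]
        exact mul_log_le htr1 hle

/-- The hypothesis `I ≤ 1`, written in polar coordinates, bounds the profile of `u` pointwise. The positive number `ω`
stands for the surface measure of the unit sphere. -/
theorem profile_bound {n m : ℕ} [NeZero n] (hm : 2 ≤ m) (hmn : 2 * m ≤ n) {p θ K ω r R x : ℝ}
    (hp : p = n / m) (hθ : θ = (p - 1) / p)
    (hK : K = ∏ j ∈ Finset.range (m - 1), |radCoef n (m - j)| ^ p) (hK0 : 0 < K) (hω : 0 < ω)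
    {u : EuclideanSpace ℝ (Fin n) → ℝ} (hr : IsRadial u) (hu : ContDiff ℝ (⊤ : ℕ∞) u)
    (hr0 : 0 < r) (hrR : r ≤ R) (hs : tsupport u ⊆ Metric.ball 0 r)
    (hA : IntegrableOn (fun y => |radW u m y| ^ p / y) (Set.Ioo 0 r))
    (hI : ω * (∫ y in Set.Ioo 0 r, |radW u m y| ^ p / y) -
      Rnm n m * (ω * ∫ y in Set.Ioo 0 r, |profile u y| ^ p / (y * E1 (y / R) ^ p)) ≤ 1)
    (hx : 0 < x) (hxr : x < r) :
    |profile u x| ≤ (2 ^ (p - 1) * ((1 / ω + 1) / K) + 1) *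
      (E1 (x / R) * Real.log (E1 (x / R) / E1 (r / R))) ^ θ := by
  have hR : 0 < R := by linarith
  have hm0 : (0 : ℝ) < m := by exact_mod_cast (by omega : 0 < m)
  have hp2 : 2 ≤ p := by
    rw [hp, le_div_iff₀ hm0]; exact_mod_cast hmn
  have hp0 : 0 < p := by linarith
  have hθ0 : 0 < θ := by rw [hθ]; exact div_pos (by linarith) hp0
  have hRnm : Rnm n m = θ ^ p * K := by rw [Rnm_eq hm hmn hp hθ, hK]
  have hRnm0 : 0 < Rnm n m := by rw [hRnm]; positivity
  have hWr : ∀ i, radW u i r = 0 := fun i => by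
    rw [radW, radDer_eq_zero hr hu hr0 hs, mul_zero]
  obtain ⟨err, herr, hchain⟩ := hardy_chain hp2 (contDiff_radW hr hu) hWr
    (fun i hi => by rw [radW, zero_pow (by omega), zero_mul]) (radW_succ hr hu) m (m - 1)
    (by omega)
  set B : ℝ → ℝ := fun y => |profile u y| ^ p / (y * E1 (y / R) ^ p) with hB
  have hBnn : ∀ y, 0 < y → y ≤ r → 0 ≤ B y := fun y hy hyr => by
    have := one_le_E1_div hR hy (hyr.trans hrR)
    simp only [hB]; positivity
  have hBlim : ∀ᶠ ε in nhdsWithin (0 : ℝ) (Set.Ioi 0),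
      Rnm n m * (∫ y in Set.Ioo 0 r, B y) ≤ Rnm n m * (∫ y in ε..r, B y) + 1 / 2 := by
    -- If `B` is not integrable, its integral over `(0, r)` is `0` by convention, and the claim holds
    -- because `B ≥ 0`.
    by_cases hBi : IntegrableOn B (Set.Ioo 0 r)
    · have hBi' : IntegrableOn B (Set.uIcc 0 r) := by
        rwa [Set.uIcc_of_le hr0.le, integrableOn_Icc_iff_integrableOn_Ioo]
      have hc := (intervalIntegral.continuousOn_primitive_interval_left hBi') 0
        Set.left_mem_uIcc
      have hc2 : Filter.Tendsto (fun ε => Rnm n m * (∫ y in ε..r, B y) + 1 / 2)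
          (nhdsWithin (0 : ℝ) (Set.Ioo 0 r))
          (nhds (Rnm n m * (∫ y in (0 : ℝ)..r, B y) + 1 / 2)) :=
        ((hc.mono_left (nhdsWithin_mono _ (by
          rw [Set.uIcc_of_le hr0.le]; exact Set.Ioo_subset_Icc_self))).const_mul _).add_const _
      rw [nhdsWithin_Ioo_eq_nhdsGT hr0] at hc2
      rw [intervalIntegral.integral_of_le hr0.le, integral_Ioc_eq_integral_Ioo] at hc2
      filter_upwards [hc2.eventually_const_lt (by linarith :
        Rnm n m * (∫ y in Set.Ioo 0 r, B y) < Rnm n m * (∫ y in Set.Ioo 0 r, B y) + 1 / 2)]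
        with ε h using h.le
    · filter_upwards [Ioo_mem_nhdsGT hr0] with ε hε
      rw [integral_undef hBi, mul_zero]
      have : 0 ≤ ∫ y in ε..r, B y :=
        intervalIntegral.integral_nonneg hε.2.le fun y hy =>
          hBnn y (hε.1.trans_le hy.1) hy.2
      positivity
  have herr' : ∀ᶠ ε in nhdsWithin (0 : ℝ) (Set.Ioi 0), err ε < 1 / 2 :=
    (herr.mono_left nhdsWithin_le_nhds).eventually_lt_const (by norm_num)
  -- At this `ε` the two errors add up to at most `1`, whence the constant `1 / ω + 1`.
  obtain ⟨ε, ⟨h1, h2⟩, hε0, hεx⟩ := ((hBlim.and herr').and (Ioo_mem_nhdsGT hx)).exists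
  have hεr : ε ≤ r := by linarith
  have hch := hchain ε hε0 hεr
  rw [← hK, show m - (m - 1) = 1 by omega] at hch
  have hQm : ∫ y in ε..r, |radW u m y| ^ p / y ≤ ∫ y in Set.Ioo 0 r, |radW u m y| ^ p / y := by
    rw [intervalIntegral.integral_of_le hεr, integral_Ioc_eq_integral_Ioo]
    refine setIntegral_mono_set hA ?_ (Set.Ioo_subset_Ioo_left hε0.le).eventuallyLE
    filter_upwards [ae_restrict_mem measurableSet_Ioo] with y hy
    have := hy.1
    positivity
  have hI' : (∫ y in Set.Ioo 0 r, |radW u m y| ^ p / y) -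
      Rnm n m * (∫ y in Set.Ioo 0 r, B y) ≤ 1 / ω := by
    rw [le_div_iff₀ hω]; linarith
  have hfin : (∫ y in ε..r, |radW u 1 y| ^ p / y) - θ ^ p * (∫ y in ε..r, B y) ≤
      (1 / ω + 1) / K := by
    rw [le_div_iff₀ hK0]
    rw [hRnm] at hI' h1
    linarith
  have hgd : ContDiff ℝ (⊤ : ℕ∞) (profile u) := contDiff_profile hu
  have hgr : profile u r = 0 := by
    have := radDer_eq_zero hr hu hr0 hs 0
    simpa [radDer] using this
  have hW1 : ∀ y, radW u 1 y = y * deriv (profile u) y := fun y => by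
    simp [radW, radDer]
  simp only [hW1] at hfin
  exact critical_step hp2 hθ hrR
    (fun y => (hgd.differentiable (by simp) y).hasDerivAt)
    (hgd.continuous_deriv (by exact_mod_cast le_top)) hgr hε0 hεx.le hxr hfin

theorem integral_ball_radial {n : ℕ} [NeZero n] {r : ℝ} (F : ℝ → ℝ) :
    ∫ x in Metric.ball (0 : EuclideanSpace ℝ (Fin n)) r, F ‖x‖ =
      n * (volume : Measure (EuclideanSpace ℝ (Fin n))).real (Metric.ball 0 1) *
        ∫ y in Set.Ioo 0 r, y ^ (n - 1) * F y := by
  have h := integral_fun_norm_addHaar (volume : Measure (EuclideanSpace ℝ (Fin n)))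
    ((Set.Iio r).indicator F)
  rw [← integral_indicator Metric.isOpen_ball.measurableSet]
  have e1 : (fun x : EuclideanSpace ℝ (Fin n) => (Set.Iio r).indicator F ‖x‖) =
      (Metric.ball (0 : EuclideanSpace ℝ (Fin n)) r).indicator fun x => F ‖x‖ := by
    funext x
    simp [Set.indicator]
  have e2 : (fun y : ℝ => y ^ (n - 1) • (Set.Iio r).indicator F y) =
      (Set.Iio r).indicator fun y => y ^ (n - 1) * F y := by
    funext y
    simp [Set.indicator]
  rw [e1, finrank_euclideanSpace_fin, e2, setIntegral_indicator measurableSet_Iio,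
    Set.Ioi_inter_Iio] at h
  rw [h, nsmul_eq_mul, smul_eq_mul, mul_assoc]

/-- Leray–Adams inequality for radial functions (Theorem 2). -/
theorem stmt4 (n m : ℕ) (hm : 2 ≤ m) (hmn : 2 * m ≤ n) :
    ∃ a b : ℝ, 0 < a ∧ 0 < b ∧
      ∀ r : ℝ, 0 < r → ∀ β R c : ℝ, ((n : ℝ) - m) / n ≤ β → r ≤ R → 0 < c → c ≤ a →
        ∀ u : EuclideanSpace ℝ (Fin n) → ℝ,
          ContDiff ℝ (⊤ : ℕ∞) u → HasCompactSupport u →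
          tsupport u ⊆ Metric.ball 0 r → (∃ g : ℝ → ℝ, ∀ x, u x = g ‖x‖) →
          Inm n m (Metric.ball 0 r) R u ≤ 1 →
          (∫ x in Metric.ball (0 : EuclideanSpace ℝ (Fin n)) r,
              Real.exp (c * (|u x| / (E2 (‖x‖ / R)) ^ β) ^ ((n : ℝ) / ((n : ℝ) - m)))) ≤
            b * (volume (Metric.ball (0 : EuclideanSpace ℝ (Fin n)) r)).toReal := by
  have : NeZero n := ⟨by omega⟩
  have : Nontrivial (Fin n) := Fin.nontrivial_iff_two_le.2 (by omega)
  have hm0 : (0 : ℝ) < m := by exact_mod_cast (by omega : 0 < m)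
  have hmn' : (2 : ℝ) * m ≤ n := by exact_mod_cast hmn
  have hm2 : (2 : ℝ) ≤ m := by exact_mod_cast hm
  have hn0 : (0 : ℝ) < n := by linarith
  obtain ⟨p, hp⟩ : ∃ p : ℝ, p = n / m := ⟨_, rfl⟩
  obtain ⟨θ, hθ⟩ : ∃ θ : ℝ, θ = (p - 1) / p := ⟨_, rfl⟩
  have hp2 : 2 ≤ p := by rw [hp, le_div_iff₀ hm0]; exact hmn'
  have hp0 : 0 < p := by linarith
  have hθ' : θ = ((n : ℝ) - m) / n := by rw [hθ, hp]; field_simp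
  have hθ0 : 0 < θ := by rw [hθ']; exact div_pos (by linarith) hn0
  have hθinv : (n : ℝ) / ((n : ℝ) - m) = 1 / θ := by rw [hθ', one_div_div]
  obtain ⟨K, hK⟩ : ∃ K : ℝ, K = ∏ j ∈ Finset.range (m - 1), |radCoef n (m - j)| ^ p := ⟨_, rfl⟩
  have hK0 : 0 < K := by
    rw [hK]
    refine Finset.prod_pos fun j hj => Real.rpow_pos_of_pos (abs_pos.2 ?_) _
    have hj' := Finset.mem_range.1 hj
    have h1 : ((m - j : ℕ) : ℝ) ≤ m := by exact_mod_cast Nat.sub_le m j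
    have h2 : (2 : ℝ) ≤ ((m - j : ℕ) : ℝ) := by exact_mod_cast (by omega : 2 ≤ m - j)
    unfold radCoef
    split_ifs
    · intro h; linarith
    · intro h; linarith
  obtain ⟨v, hv⟩ : ∃ v : ℝ,
    v = (volume : Measure (EuclideanSpace ℝ (Fin n))).real (Metric.ball 0 1) := ⟨_, rfl⟩
  have hv0 : 0 < v := by
    rw [hv, measureReal_def]
    exact ENNReal.toReal_pos (Metric.measure_ball_pos volume _ one_pos).ne' measure_ball_lt_top.ne
  have hω : 0 < n * v := by positivity
  obtain ⟨C, hC⟩ : ∃ C : ℝ, C = 2 ^ (p - 1) * ((1 / (n * v) + 1) / K) + 1 := ⟨_, rfl⟩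
  have hC0 : 0 < C := by rw [hC]; positivity
  have hC1 : 0 < C ^ (1 / θ) := by positivity
  have hn1 : 0 < (n : ℝ) - 1 := by linarith
  refine ⟨1 / (2 * C ^ (1 / θ)), n / (n - 1), by positivity, by positivity, ?_⟩
  intro r hr0 β R c hβ hrR hc hca u hu _ hs ⟨g, hg⟩ hI
  have hrad : IsRadial u := fun x y hxy => by rw [hg, hg, hxy]
  -- The radial formulas for `∇^m u` hold only away from the origin, which is a null set.
  have hne : ∀ᵐ x : EuclideanSpace ℝ (Fin n), x ≠ 0 := by
    rw [ae_iff]; simp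
  have hWm : ∀ y, 0 < y → |radW u m y| ^ p / y = y ^ (n - 1) * |radDer u m y| ^ p := by
    intro y hy
    have h1 : (y ^ m) ^ p = y ^ (n - 1) * y := by
      rw [← pow_succ, Nat.sub_add_cancel (by omega), ← Real.rpow_natCast y m,
        ← Real.rpow_mul hy.le, ← Real.rpow_natCast y n]
      congr 1
      rw [hp]; field_simp
    rw [radW, abs_mul, abs_of_pos (pow_pos hy m), Real.mul_rpow (by positivity) (abs_nonneg _), h1]
    field_simp
  have hA : IntegrableOn (fun y => |radW u m y| ^ p / y) (Set.Ioo 0 r) := by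
    have hc : Continuous fun y => y ^ (n - 1) * |radDer u m y| ^ p :=
      (continuous_id.pow _).mul
        ((contDiff_radDer hrad hu m).continuous.abs.rpow_const fun _ => Or.inr hp0.le)
    refine ((hc.integrableOn_Icc (a := 0) (b := r)).mono_set
      Set.Ioo_subset_Icc_self).congr_fun ?_ measurableSet_Ioo
    exact fun y hy => (hWm y hy.1).symm
  have hI1 : ∫ x in Metric.ball 0 r, (nablaPowNorm m u x) ^ p =
      n * v * ∫ y in Set.Ioo 0 r, |radW u m y| ^ p / y := by
    have e1 : ∫ x in Metric.ball 0 r, (nablaPowNorm m u x) ^ p =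
        ∫ x in Metric.ball (0 : EuclideanSpace ℝ (Fin n)) r,
          |radDer u m ‖x‖| ^ p := by
      refine integral_congr_ae (ae_restrict_of_ae ?_)
      filter_upwards [hne] with x hx
      rw [nablaPowNorm_eq hrad hu m hx]
    rw [e1, integral_ball_radial (fun y => |radDer u m y| ^ p), ← hv]
    congr 1
    exact setIntegral_congr_fun measurableSet_Ioo fun y hy => (hWm y hy.1).symm
  have hI2 : ∫ x in Metric.ball (0 : EuclideanSpace ℝ (Fin n)) r,
        |u x| ^ p / (‖x‖ ^ n * (E1 (‖x‖ / R)) ^ p) =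
      n * v * ∫ y in Set.Ioo 0 r, |profile u y| ^ p / (y * E1 (y / R) ^ p) := by
    have e1 : ∫ x in Metric.ball (0 : EuclideanSpace ℝ (Fin n)) r,
        |u x| ^ p / (‖x‖ ^ n * (E1 (‖x‖ / R)) ^ p) =
        ∫ x in Metric.ball (0 : EuclideanSpace ℝ (Fin n)) r,
          |profile u ‖x‖| ^ p / (‖x‖ ^ n * (E1 (‖x‖ / R)) ^ p) := by
      congr 1
      funext x
      rw [hrad.eq_profile x]
    rw [e1, integral_ball_radial (fun y => |profile u y| ^ p / (y ^ n * (E1 (y / R)) ^ p)), ← hv]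
    congr 1
    refine setIntegral_congr_fun measurableSet_Ioo fun y hy => ?_
    have hy0 := hy.1
    have : y ^ n = y ^ (n - 1) * y := by rw [← pow_succ, Nat.sub_add_cancel (by omega)]
    simp only [this]
    rw [mul_assoc, ← mul_div_assoc, mul_div_mul_left _ _ (by positivity)]
  rw [Inm, ← hp, hI1, hI2] at hI
  have hprof : ∀ x, 0 < x → x < r → _ := fun x hx hxr =>
    profile_bound (x := x) hm hmn hp hθ hK hK0 hω hrad hu hr0 hrR hs hA hI hx hxr
  have hexp : ∀ x ∈ Metric.ball (0 : EuclideanSpace ℝ (Fin n)) r, x ≠ 0 →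
      Real.exp (c * (|u x| / (E2 (‖x‖ / R)) ^ β) ^ ((n : ℝ) / ((n : ℝ) - m))) ≤ r / ‖x‖ := by
    intro x hx hx0
    have h0 : 0 < ‖x‖ := norm_pos_iff.2 hx0
    have h1 : ‖x‖ < r := mem_ball_zero_iff.1 hx
    have hb := hprof ‖x‖ h0 h1
    rw [← hC, ← hrad.eq_profile] at hb
    have hb2 := exponent_bound hθ0 (hθ' ▸ hβ) hC0.le h0 h1 hrR hb
    have hlog : 0 ≤ Real.log (r / ‖x‖) := Real.log_nonneg (by rw [one_le_div h0]; exact h1.le)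
    rw [hθinv, ← Real.le_log_iff_exp_le (by positivity)]
    calc _ ≤ 1 / (2 * C ^ (1 / θ)) * (C ^ (1 / θ) * (2 * Real.log (r / ‖x‖))) :=
          mul_le_mul hca hb2 (by
            refine Real.rpow_nonneg (div_nonneg (abs_nonneg _) (Real.rpow_nonneg ?_ _)) _
            have := one_le_E1_div (hr0.trans_le hrR) h0 (h1.le.trans hrR)
            unfold E2
            linarith [Real.log_nonneg this]) (by positivity)
      _ = _ := by field_simp
  -- `∫ r / ‖x‖ = n v r ∫₀ʳ y ^ (n - 2) dy`.
  have hpow : ∀ y ∈ Set.Ioo 0 r, y ^ (n - 1) * (r / y) = r * y ^ (n - 2) := by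
    intro y hy
    have hy0 := hy.1
    rw [show n - 1 = n - 2 + 1 by omega, pow_succ]
    field_simp
  have hval : ∫ x in Metric.ball (0 : EuclideanSpace ℝ (Fin n)) r, r / ‖x‖ =
      n / (n - 1) * (r ^ n * v) := by
    rw [integral_ball_radial (fun y => r / y), ← hv,
      setIntegral_congr_fun measurableSet_Ioo hpow, ← integral_Ioc_eq_integral_Ioo,
      ← intervalIntegral.integral_of_le hr0.le, intervalIntegral.integral_const_mul, integral_pow,
      zero_pow (by omega), show n - 2 + 1 = n - 1 by omega,
      show ((n - 2 : ℕ) : ℝ) + 1 = n - 1 by rw [Nat.cast_sub (by omega)]; push_cast; ring]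
    have : r ^ n = r * r ^ (n - 1) := by rw [← pow_succ', Nat.sub_add_cancel (by omega)]
    rw [this]
    field_simp
    ring
  have hint : IntegrableOn (fun x : EuclideanSpace ℝ (Fin n) => r / ‖x‖) (Metric.ball 0 r) := by
    -- A function that is not integrable would have integral `0`, and this one is positive.
    by_contra hcon
    have h0 := integral_undef hcon
    rw [hval] at h0
    have : 0 < n / (n - 1) * (r ^ n * v) := by positivity
    linarith
  have hvol : (volume (Metric.ball (0 : EuclideanSpace ℝ (Fin n)) r)).toReal = r ^ n * v := by
    rw [Measure.addHaar_ball volume _ hr0.le, ENNReal.toReal_mul, finrank_euclideanSpace_fin,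
      ENNReal.toReal_ofReal (by positivity), hv, measureReal_def]
  rw [hvol, ← hval]
  refine integral_mono_of_nonneg (Filter.Eventually.of_forall fun x => (Real.exp_pos _).le) hint ?_
  filter_upwards [ae_restrict_mem measurableSet_ball, ae_restrict_of_ae hne] with x hx hx0
  exact hexp x hx hx0
end

section
/- Let Ω be a bounded domain in ℝ⁴ containing the origin and let R ≥ R_Ω. Then for every function u ∈ C₀^∞(Ω \ {0}) (smooth, compactly supported in Ω, vanishing in a neighborhood of the origin), setting v(x) := E₁(|x|/R)^{−1/2} · u(x), one has ∫_Ω (Δu)² dx − ∫_Ω u(x)² / ( |x|⁴ · E₁(|x|/R)² ) dx ≥ (2/3) · ∫_Ω E₁(|x|/R) · (Δv)² dx. -/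
/-!
Let `D` be the derivative along the Euler field `x ↦ x`, and `L₁, L₂, L₃` the derivatives along the
fields given by left multiplication by the quaternion units. The four fields are orthogonal of
length `‖x‖`, each `Lₐ` annihilates radial functions and commutes with `D`, and
`‖x‖² Δ = D² + 2 D + ∑ Lₐ²` (`lap_frame`). The density `ρ = ‖x‖⁻⁴` is invariant under all four
flows, so `∫ ρ D g = ∫ ρ Lₐ g = 0` for every smooth `g` with compact support away from the origin
(`integral_mul_dd`).

Put `p = 1 / E₁(‖x‖ / R)`, so that `D p = p²`. Since `Ω` lies in the closed ball of radius `R`, the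
points of the support of `u` satisfy `0 < p ≤ 1`. The function `v = p^(1/2) u` has
`‖x‖² Δ v = p^(1/2) (w₂ + 2 w₁ + ∑ Lₐ² u)`, where `w₁ = D u + p u / 2` and
`w₂ = D² u + p D u + (3/4) p² u`. Hence the integrand of the difference of the two sides is
`ρ ((D² u + 2 D u + ∑ Lₐ² u)² - p² u² - (2/3) (w₂ + 2 w₁ + ∑ Lₐ² u)²)`, a quadratic form in the
derivatives of `u` with coefficients polynomial in `p`. It equals `ρ` times a sum of terms `D F`,
`D Gₐ + Lₐ Hₐ` with explicit potentials, plus `ρ` times a combination of squares whose coefficients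
are nonnegative for `0 ≤ p ≤ 1` (`pointwise_sos`). The divergence terms integrate to zero.
-/

open MeasureTheory Real

/-! ### Derivatives along linear vector fields -/

/-- The derivative of `f` along the linear vector field `x ↦ A x`. -/
noncomputable def dd (A : EuclideanSpace ℝ (Fin 4) →L[ℝ] EuclideanSpace ℝ (Fin 4))
    (f : EuclideanSpace ℝ (Fin 4) → ℝ) : EuclideanSpace ℝ (Fin 4) → ℝ :=
  fun x => fderiv ℝ f x (A x)

/-- `f` is differentiable at `x`, with derivative `d` along the linear vector field `A`. -/
def HasDD (A : EuclideanSpace ℝ (Fin 4) →L[ℝ] EuclideanSpace ℝ (Fin 4))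
    (f : EuclideanSpace ℝ (Fin 4) → ℝ) (x : EuclideanSpace ℝ (Fin 4)) (d : ℝ) : Prop :=
  ∃ f' : EuclideanSpace ℝ (Fin 4) →L[ℝ] ℝ, HasFDerivAt f f' x ∧ f' (A x) = d

namespace HasDD

variable {A : EuclideanSpace ℝ (Fin 4) →L[ℝ] EuclideanSpace ℝ (Fin 4)}
  {f g : EuclideanSpace ℝ (Fin 4) → ℝ} {x : EuclideanSpace ℝ (Fin 4)} {a b : ℝ}

theorem dd_eq (h : HasDD A f x a) : dd A f x = a := by
  obtain ⟨f', hf, rfl⟩ := h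
  simp [dd, hf.fderiv]

theorem of_diff (h : DifferentiableAt ℝ f x) : HasDD A f x (dd A f x) :=
  ⟨_, h.hasFDerivAt, rfl⟩

theorem of_eq (h : HasDD A f x a) (e : a = b) : HasDD A f x b := e ▸ h

theorem const (c : ℝ) : HasDD A (fun _ => c) x 0 :=
  ⟨0, hasFDerivAt_const c x, rfl⟩

theorem add (h : HasDD A f x a) (k : HasDD A g x b) : HasDD A (fun y => f y + g y) x (a + b) := by
  obtain ⟨f', hf, rfl⟩ := h
  obtain ⟨g', hg, rfl⟩ := k
  exact ⟨_, hf.fun_add hg, by simp⟩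

theorem sub (h : HasDD A f x a) (k : HasDD A g x b) : HasDD A (fun y => f y - g y) x (a - b) := by
  obtain ⟨f', hf, rfl⟩ := h
  obtain ⟨g', hg, rfl⟩ := k
  exact ⟨_, hf.fun_sub hg, by simp⟩

theorem mul (h : HasDD A f x a) (k : HasDD A g x b) :
    HasDD A (fun y => f y * g y) x (a * g x + f x * b) := by
  obtain ⟨f', hf, rfl⟩ := h
  obtain ⟨g', hg, rfl⟩ := k
  exact ⟨_, hf.fun_mul hg, by simp; ring⟩

theorem comp {φ : ℝ → ℝ} {c : ℝ} (hφ : HasDerivAt φ c (f x)) (h : HasDD A f x a) :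
    HasDD A (fun y => φ (f y)) x (c * a) := by
  obtain ⟨f', hf, rfl⟩ := h
  exact ⟨_, hφ.comp_hasFDerivAt x hf, by simp⟩

end HasDD

/-! ### Smooth functions supported in a fixed set, and the divergence theorem -/

/-- Smooth functions on `ℝ⁴` that vanish off `K`. -/
def Adm (K : Set (EuclideanSpace ℝ (Fin 4))) (g : EuclideanSpace ℝ (Fin 4) → ℝ) : Prop :=
  ContDiff ℝ (⊤ : ℕ∞) g ∧ ∀ x ∉ K, g x = 0

namespace Adm

variable {K : Set (EuclideanSpace ℝ (Fin 4))} {f g : EuclideanSpace ℝ (Fin 4) → ℝ}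

theorem differentiableAt (h : Adm K g) (x : EuclideanSpace ℝ (Fin 4)) : DifferentiableAt ℝ g x :=
  (h.1.differentiable (by simp)) x

theorem hasDD (h : Adm K g) (A : EuclideanSpace ℝ (Fin 4) →L[ℝ] EuclideanSpace ℝ (Fin 4))
    (x : EuclideanSpace ℝ (Fin 4)) : HasDD A g x (dd A g x) :=
  HasDD.of_diff (h.differentiableAt x)

theorem add (h : Adm K f) (k : Adm K g) : Adm K (fun y => f y + g y) :=
  ⟨h.1.add k.1, fun x hx => by simp [h.2 x hx, k.2 x hx]⟩

theorem sub (h : Adm K f) (k : Adm K g) : Adm K (fun y => f y - g y) :=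
  ⟨h.1.sub k.1, fun x hx => by simp [h.2 x hx, k.2 x hx]⟩

theorem const_mul (c : ℝ) (h : Adm K f) : Adm K (fun y => c * f y) :=
  ⟨contDiff_const.mul h.1, fun x hx => by simp [h.2 x hx]⟩

theorem mul (h : Adm K f) (k : Adm K g) : Adm K (fun y => f y * g y) :=
  ⟨h.1.mul k.1, fun x hx => by simp [h.2 x hx]⟩

theorem eventually (hK : IsClosed K) (h : Adm K g) {x : EuclideanSpace ℝ (Fin 4)} (hx : x ∉ K) :
    g =ᶠ[nhds x] fun _ => 0 := by
  filter_upwards [hK.isOpen_compl.mem_nhds hx] with y hy using h.2 y hy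

/-- A factor that is smooth only at the points of `K` may be multiplied in. -/
theorem wmul (hK : IsClosed K) (hf : ∀ x ∈ K, ContDiffAt ℝ (⊤ : ℕ∞) f x) (h : Adm K g) :
    Adm K (fun y => f y * g y) := by
  refine ⟨contDiff_iff_contDiffAt.2 fun x => ?_, fun x hx => by simp [h.2 x hx]⟩
  by_cases hx : x ∈ K
  · exact (hf x hx).mul h.1.contDiffAt
  · refine (contDiffAt_const (c := (0 : ℝ))).congr_of_eventuallyEq ?_
    filter_upwards [h.eventually hK hx] with y hy
    simp [hy]

theorem fderiv_apply (hK : IsClosed K) (h : Adm K g)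
    {X : EuclideanSpace ℝ (Fin 4) → EuclideanSpace ℝ (Fin 4)} (hX : ContDiff ℝ (⊤ : ℕ∞) X) :
    Adm K (fun x => fderiv ℝ g x (X x)) := by
  refine ⟨(h.1.fderiv_right (m := ((⊤ : ℕ∞) : WithTop ℕ∞)) (by simp)).clm_apply hX,
    fun x hx => ?_⟩
  simp [(h.eventually hK hx).fderiv_eq]

theorem dd (hK : IsClosed K) (h : Adm K g)
    (A : EuclideanSpace ℝ (Fin 4) →L[ℝ] EuclideanSpace ℝ (Fin 4)) : Adm K (dd A g) :=
  h.fderiv_apply hK A.contDiff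

theorem lap (hK : IsClosed K) (h : Adm K g) : Adm K (lap g) := by
  have hi (i : Fin 4) := (h.fderiv_apply hK
    (contDiff_const (c := EuclideanSpace.single i (1 : ℝ)))).fderiv_apply hK
    (contDiff_const (c := EuclideanSpace.single i (1 : ℝ)))
  refine ⟨ContDiff.sum fun i _ => (hi i).1, fun x hx => Finset.sum_eq_zero fun i _ => (hi i).2 x hx⟩

theorem integrable (hK : IsCompact K) (h : Adm K g) : Integrable g :=
  h.1.continuous.integrable_of_hasCompactSupport
    (HasCompactSupport.intro' hK hK.isClosed h.2)

end Adm

/-- Divergence theorem for a linear vector field `A`, whose divergence is its trace. -/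
theorem integral_dd {K : Set (EuclideanSpace ℝ (Fin 4))} (hK : IsCompact K)
    {g : EuclideanSpace ℝ (Fin 4) → ℝ} (hg : Adm K g)
    (A : EuclideanSpace ℝ (Fin 4) →L[ℝ] EuclideanSpace ℝ (Fin 4)) :
    ∫ x, dd A g x = -(∑ i, A (EuclideanSpace.single i 1) i) * ∫ x, g x := by
  have key (i : Fin 4) : Integrable (fun x => (A x) i * fderiv ℝ g x (EuclideanSpace.single i 1)) ∧
      ∫ x, (A x) i * fderiv ℝ g x (EuclideanSpace.single i 1) =
      -(A (EuclideanSpace.single i 1) i * ∫ x, g x) := by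
    set L : EuclideanSpace ℝ (Fin 4) →L[ℝ] ℝ := (EuclideanSpace.proj i).comp A with hL
    have hL' (x) : (A x) i = L x := rfl
    simp only [hL']
    have hd := hg.fderiv_apply hK.isClosed
      (contDiff_const (c := EuclideanSpace.single i (1 : ℝ)))
    have h1 := (hd.wmul hK.isClosed (fun x _ => L.contDiff.contDiffAt)).integrable hK
    refine ⟨h1, ?_⟩
    rw [integral_mul_fderiv_eq_neg_fderiv_mul_of_integrable]
    · simp [integral_const_mul]
    · simpa using (hg.integrable hK).const_mul _
    · exact h1
    · exact (hg.wmul hK.isClosed (fun x _ => L.contDiff.contDiffAt)).integrable hK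
    · exact fun x _ => L.differentiableAt
    · exact fun x _ => hg.differentiableAt x
  have hexp (x) : dd A g x = ∑ i, (A x) i * fderiv ℝ g x (EuclideanSpace.single i 1) := by
    have hx : A x = ∑ i, (A x) i • EuclideanSpace.single i (1 : ℝ) := by
      ext j
      fin_cases j <;> simp [Fin.sum_univ_four]
    conv_lhs => rw [dd, hx, map_sum]
    simp
  simp_rw [hexp]
  rw [integral_finsetSum _ (fun i _ => (key i).1), neg_mul, Finset.sum_mul, ← Finset.sum_neg_distrib]
  exact Finset.sum_congr rfl fun i _ => (key i).2

/-- A density `ρ` whose derivative along `A` is `-(tr A) ρ` is invariant under the flow of `A`, so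
derivatives along `A` integrate to zero against it. -/
theorem integral_mul_dd {K : Set (EuclideanSpace ℝ (Fin 4))} (hK : IsCompact K)
    {g ρ : EuclideanSpace ℝ (Fin 4) → ℝ} (hg : Adm K g)
    {A : EuclideanSpace ℝ (Fin 4) →L[ℝ] EuclideanSpace ℝ (Fin 4)} {t : ℝ}
    (ht : ∑ i, A (EuclideanSpace.single i 1) i = t)
    (hρ : ∀ x ∈ K, ContDiffAt ℝ (⊤ : ℕ∞) ρ x) (hρA : ∀ x ∈ K, HasDD A ρ x (-t * ρ x)) :
    ∫ x, ρ x * dd A g x = 0 := by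
  have hm := hg.wmul hK.isClosed hρ
  have h1 := integral_dd hK hm A
  have h2 : (fun x => ρ x * dd A g x) =
      fun x => dd A (fun y => ρ y * g y) x + t * (ρ x * g x) := by
    funext x
    by_cases hx : x ∈ K
    · rw [((hρA x hx).mul (hg.hasDD A x)).dd_eq]
      ring
    · simp [(hm.dd hK.isClosed A).2 x hx, (hg.dd hK.isClosed A).2 x hx, hg.2 x hx]
  rw [h2, integral_add ((hm.dd hK.isClosed A).integrable hK) ((hm.integrable hK).const_mul t),
    h1, ht, integral_const_mul]
  ring

/-! ### The quaternionic frame -/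

/-- Left multiplication by the quaternion unit `i`. -/
noncomputable def J1 : EuclideanSpace ℝ (Fin 4) →L[ℝ] EuclideanSpace ℝ (Fin 4) :=
  Matrix.toEuclideanCLM (n := Fin 4) (𝕜 := ℝ) !![0,-1,0,0; 1,0,0,0; 0,0,0,-1; 0,0,1,0]

/-- Left multiplication by the quaternion unit `j`. -/
noncomputable def J2 : EuclideanSpace ℝ (Fin 4) →L[ℝ] EuclideanSpace ℝ (Fin 4) :=
  Matrix.toEuclideanCLM (n := Fin 4) (𝕜 := ℝ) !![0,0,-1,0; 0,0,0,1; 1,0,0,0; 0,-1,0,0]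

/-- Left multiplication by the quaternion unit `k`. -/
noncomputable def J3 : EuclideanSpace ℝ (Fin 4) →L[ℝ] EuclideanSpace ℝ (Fin 4) :=
  Matrix.toEuclideanCLM (n := Fin 4) (𝕜 := ℝ) !![0,0,0,-1; 0,0,-1,0; 0,1,0,0; 1,0,0,0]

/-- The Euler field `x ↦ x`. -/
noncomputable abbrev J0 : EuclideanSpace ℝ (Fin 4) →L[ℝ] EuclideanSpace ℝ (Fin 4) :=
  ContinuousLinearMap.id ℝ _

theorem J1_apply (x : EuclideanSpace ℝ (Fin 4)) : J1 x = !₂[-x 1, x 0, -x 3, x 2] := by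
  ext i
  fin_cases i <;> simp [J1, Matrix.mulVec, dotProduct, Fin.sum_univ_four]

theorem J2_apply (x : EuclideanSpace ℝ (Fin 4)) : J2 x = !₂[-x 2, x 3, x 0, -x 1] := by
  ext i
  fin_cases i <;> simp [J2, Matrix.mulVec, dotProduct, Fin.sum_univ_four]

theorem J3_apply (x : EuclideanSpace ℝ (Fin 4)) : J3 x = !₂[-x 3, -x 2, x 1, x 0] := by
  ext i
  fin_cases i <;> simp [J3, Matrix.mulVec, dotProduct, Fin.sum_univ_four]

/-- Second derivatives along linear fields in terms of the Hessian; the last term is the first order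
part, because the field `B` is not constant. -/
theorem dd_dd {f : EuclideanSpace ℝ (Fin 4) → ℝ} (hf : ContDiff ℝ (⊤ : ℕ∞) f)
    (A B : EuclideanSpace ℝ (Fin 4) →L[ℝ] EuclideanSpace ℝ (Fin 4))
    (x : EuclideanSpace ℝ (Fin 4)) :
    dd A (dd B f) x = fderiv ℝ (fderiv ℝ f) x (A x) (B x) + fderiv ℝ f x (B (A x)) := by
  have h1 : HasFDerivAt (fderiv ℝ f) (fderiv ℝ (fderiv ℝ f) x) x :=
    (((hf.fderiv_right (m := ((⊤ : ℕ∞) : WithTop ℕ∞)) (by simp)).differentiable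
      (by simp)) x).hasFDerivAt
  have h2 := h1.clm_apply (B.hasFDerivAt (x := x))
  have h3 : fderiv ℝ (dd B f) x = _ := h2.fderiv
  rw [dd, h3]
  simp [add_comm]

/-- The Euler field commutes with every linear field. -/
theorem dd_J0_comm {f : EuclideanSpace ℝ (Fin 4) → ℝ} (hf : ContDiff ℝ (⊤ : ℕ∞) f)
    (A : EuclideanSpace ℝ (Fin 4) →L[ℝ] EuclideanSpace ℝ (Fin 4)) :
    dd A (dd J0 f) = dd J0 (dd A f) := by
  funext x
  rw [dd_dd hf, dd_dd hf]
  have hs : IsSymmSndFDerivAt ℝ f x :=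
    hf.contDiffAt.isSymmSndFDerivAt (by simpa using WithTop.coe_le_coe.2 (le_top : (2 : ℕ∞) ≤ ⊤))
  simp [hs.eq (A x) x]

/-- The four fields `J0, …, J3` form an orthogonal frame of length `‖x‖` at every `x`, and the
Laplacian of `ℝ⁴` is, up to the factor `‖x‖²`, a sum of squares of them plus a drift. -/
theorem lap_frame {f : EuclideanSpace ℝ (Fin 4) → ℝ} (hf : ContDiff ℝ (⊤ : ℕ∞) f)
    (x : EuclideanSpace ℝ (Fin 4)) :
    ‖x‖ ^ 2 * lap f x = dd J0 (dd J0 f) x + 2 * dd J0 f x +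
      (dd J1 (dd J1 f) x + dd J2 (dd J2 f) x + dd J3 (dd J3 f) x) := by
  have h1 : DifferentiableAt ℝ (fderiv ℝ f) x :=
    (((hf.fderiv_right (m := ((⊤ : ℕ∞) : WithTop ℕ∞)) (by simp)).differentiable
      (by simp)) x)
  have hl : lap f x = ∑ i, fderiv ℝ (fderiv ℝ f) x (EuclideanSpace.single i 1)
      (EuclideanSpace.single i 1) := by
    refine Finset.sum_congr rfl fun i _ => ?_
    rw [(h1.hasFDerivAt.clm_apply (hasFDerivAt_const (EuclideanSpace.single i (1 : ℝ)) x)).fderiv]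
    simp
  have e1 : J1 (J1 x) = -x := by
    ext i; fin_cases i <;> simp [J1_apply]
  have e2 : J2 (J2 x) = -x := by
    ext i; fin_cases i <;> simp [J2_apply]
  have e3 : J3 (J3 x) = -x := by
    ext i; fin_cases i <;> simp [J3_apply]
  simp only [dd_dd hf, e1, e2, e3]
  rw [hl]
  -- what remains is an identity for an arbitrary bilinear form, checked in coordinates
  generalize fderiv ℝ (fderiv ℝ f) x = H
  have hexp (y z : EuclideanSpace ℝ (Fin 4)) : H y z = ∑ i, ∑ j, y i * z j *
      H (EuclideanSpace.single i 1) (EuclideanSpace.single j 1) := by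
    have hx (y : EuclideanSpace ℝ (Fin 4)) : y = ∑ i, y i • EuclideanSpace.single i (1 : ℝ) := by
      ext j
      fin_cases j <;> simp [Fin.sum_univ_four]
    conv_lhs => rw [hx y, hx z]
    simp only [map_sum, map_smul, _root_.sum_apply, _root_.smul_apply,
      smul_eq_mul, Finset.mul_sum, mul_assoc]
    rw [Finset.sum_comm]
    simp only [mul_left_comm]
  rw [hexp (J1 x), hexp (J2 x), hexp (J3 x), hexp (J0 x)]
  rw [EuclideanSpace.norm_sq_eq]
  simp [J1_apply, J2_apply, J3_apply, Fin.sum_univ_four, dd]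
  ring

theorem inner_J1 (x : EuclideanSpace ℝ (Fin 4)) : inner ℝ x (J1 x) = 0 := by
  simp [J1_apply, PiLp.inner_apply, Fin.sum_univ_four]; ring

theorem inner_J2 (x : EuclideanSpace ℝ (Fin 4)) : inner ℝ x (J2 x) = 0 := by
  simp [J2_apply, PiLp.inner_apply, Fin.sum_univ_four]; ring

theorem inner_J3 (x : EuclideanSpace ℝ (Fin 4)) : inner ℝ x (J3 x) = 0 := by
  simp [J3_apply, PiLp.inner_apply, Fin.sum_univ_four]; ring

/-! ### Radial weights -/

theorem hasDD_normSq (A : EuclideanSpace ℝ (Fin 4) →L[ℝ] EuclideanSpace ℝ (Fin 4))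
    (x : EuclideanSpace ℝ (Fin 4)) :
    HasDD A (fun y => ‖y‖ ^ 2) x (2 * inner ℝ x (A x)) :=
  ⟨_, (hasStrictFDerivAt_norm_sq x).hasFDerivAt, by simp [two_smul, two_mul]⟩

theorem hasDD_density (A : EuclideanSpace ℝ (Fin 4) →L[ℝ] EuclideanSpace ℝ (Fin 4))
    {x : EuclideanSpace ℝ (Fin 4)} (hx : x ≠ 0) :
    HasDD A (fun y => (‖y‖ ^ 4)⁻¹) x (-(4 * inner ℝ x (A x) / ‖x‖ ^ 2) * (‖x‖ ^ 4)⁻¹) := by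
  have hn : ‖x‖ ≠ 0 := norm_ne_zero_iff.2 hx
  have h := HasDD.comp (φ := fun t : ℝ => (t ^ 2)⁻¹)
    (f := fun y : EuclideanSpace ℝ (Fin 4) => ‖y‖ ^ 2)
    ((hasDerivAt_pow 2 (‖x‖ ^ 2)).fun_inv (pow_ne_zero 2 (pow_ne_zero 2 hn))) (hasDD_normSq A x)
  have e : (fun y : EuclideanSpace ℝ (Fin 4) => (‖y‖ ^ 4)⁻¹) =
      fun y => ((‖y‖ ^ 2) ^ 2)⁻¹ := by
    funext y; rw [← pow_mul]
  rw [e]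
  refine h.of_eq ?_
  field_simp
  norm_num
  ring

theorem hasDD_E1 (A : EuclideanSpace ℝ (Fin 4) →L[ℝ] EuclideanSpace ℝ (Fin 4)) {R : ℝ}
    (hR : 0 < R) {x : EuclideanSpace ℝ (Fin 4)} (hx : x ≠ 0) :
    HasDD A (fun y => E1 (‖y‖ / R)) x (-(inner ℝ x (A x) / ‖x‖ ^ 2)) := by
  have hn : ‖x‖ ≠ 0 := norm_ne_zero_iff.2 hx
  have e : (fun y : EuclideanSpace ℝ (Fin 4) => E1 (‖y‖ / R)) =ᶠ[nhds x]
      fun y => (1 + Real.log R) - (1 / 2) * Real.log (‖y‖ ^ 2) := by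
    filter_upwards [isOpen_ne.mem_nhds hx] with y hy
    rw [E1, Real.log_div (norm_ne_zero_iff.2 hy) hR.ne', Real.log_pow]
    push_cast
    ring
  obtain ⟨f', hf, hd⟩ := (HasDD.const (A := A) (x := x) (1 + Real.log R)).sub
    ((HasDD.const (1 / 2)).mul (HasDD.comp (φ := Real.log)
      (Real.hasDerivAt_log (by positivity)) (hasDD_normSq A x)))
  refine ⟨f', hf.congr_of_eventuallyEq e, hd.trans ?_⟩
  field_simp
  ring

theorem trace_J0 : ∑ i, J0 (EuclideanSpace.single i (1 : ℝ)) i = 4 := by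
  simp

theorem trace_J1 : ∑ i, J1 (EuclideanSpace.single i (1 : ℝ)) i = 0 := by
  simp [J1_apply, Fin.sum_univ_four]

theorem trace_J2 : ∑ i, J2 (EuclideanSpace.single i (1 : ℝ)) i = 0 := by
  simp [J2_apply, Fin.sum_univ_four]

theorem trace_J3 : ∑ i, J3 (EuclideanSpace.single i (1 : ℝ)) i = 0 := by
  simp [J3_apply, Fin.sum_univ_four]

theorem contDiffAt_density {x : EuclideanSpace ℝ (Fin 4)} (hx : x ≠ 0) :
    ContDiffAt ℝ (⊤ : ℕ∞) (fun y : EuclideanSpace ℝ (Fin 4) => (‖y‖ ^ 4)⁻¹) x :=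
  ((contDiffAt_norm ℝ hx).pow 4).inv (by simpa using hx)

theorem contDiffAt_E1 {R : ℝ} (hR : 0 < R) {x : EuclideanSpace ℝ (Fin 4)} (hx : x ≠ 0) :
    ContDiffAt ℝ (⊤ : ℕ∞) (fun y : EuclideanSpace ℝ (Fin 4) => E1 (‖y‖ / R)) x := by
  have hn : ‖x‖ ≠ 0 := norm_ne_zero_iff.2 hx
  exact contDiffAt_const.sub (((contDiffAt_norm ℝ hx).div_const R).log
    (div_ne_zero hn hR.ne'))

/-! ### Potentials and the sum of squares -/

/-- Radial potential of the integrations by parts, as a function of the values `p` of `1 / E₁`,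
`a` of `u` and `b` of the Euler derivative of `u`. -/
noncomputable def potRadial (p a b : ℝ) : ℝ :=
  (2 / 3) * ((b + (1 / 2) * (p * a)) * (b + (1 / 2) * (p * a)))
    - p * ((b + (1 / 2) * (p * a)) * (b + (1 / 2) * (p * a)))
    - 2 * (p * (a * (b + (1 / 2) * (p * a)))) - 2 * (p * (a * a))
    - (1 / 2) * (p * (p * (a * (b + (1 / 2) * (p * a))))) + (1 / 2) * (p * (p * (a * a)))
    - p * (p * (p * (a * a)))

/-- Radial potential contributed by one angular derivative `z` of `u`, with Euler derivative `y`. -/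
noncomputable def potMixed (p z y : ℝ) : ℝ :=
  (1 / 3) * (p * (z * z)) - (2 / 3) * (z * y) - (2 / 3) * (z * z)

/-- Angular component of the vector field of the integrations by parts; `c` stands for the second
Euler derivative of `u` and `z` for its derivative along the angular field. -/
noncomputable def potAngular (p a b c z : ℝ) : ℝ :=
  (2 / 3) * ((c + p * b + (3 / 4) * (p * (p * a))) * z)
    + (4 / 3) * ((b + (1 / 2) * (p * a)) * z) - 2 * (p * ((b + (1 / 2) * (p * a)) * z))
    - 2 * (p * (a * z)) - (1 / 2) * (p * (p * (a * z)))

section potentials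

variable {A : EuclideanSpace ℝ (Fin 4) →L[ℝ] EuclideanSpace ℝ (Fin 4)}
  {x : EuclideanSpace ℝ (Fin 4)} {p a b c z y : EuclideanSpace ℝ (Fin 4) → ℝ}
  {b' c' ℓ t : ℝ}

/-- Derivative of the radial potential along the Euler field, along which `1 / E₁` has derivative
`(1 / E₁)²`. The quantities `w1`, `w1'` are the value and the derivative of `b + p a / 2`, which is
`E₁^(1/2)` times the Euler derivative of `v`. -/
theorem hasDD_potRadial (hp : HasDD A p x (p x ^ 2)) (ha : HasDD A a x (b x))
    (hb : HasDD A b x c') :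
    HasDD A (fun w => potRadial (p w) (a w) (b w)) x
      (let w1 := b x + 1 / 2 * p x * a x
       let w1' := c' + 1 / 2 * (p x ^ 2 * a x + p x * b x)
       4 / 3 * w1 * w1' - p x ^ 2 * w1 ^ 2 - 2 * p x * w1 * w1'
        - 2 * (p x ^ 2 * a x * w1 + p x * b x * w1 + p x * a x * w1')
        - 2 * p x ^ 2 * a x ^ 2 - 4 * p x * a x * b x
        - p x ^ 3 * a x * w1 - 1 / 2 * p x ^ 2 * (b x * w1 + a x * w1')
        + p x ^ 3 * a x ^ 2 + p x ^ 2 * a x * b x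
        - 3 * p x ^ 4 * a x ^ 2 - 2 * p x ^ 3 * a x * b x) := by
  simp only [potRadial]
  apply HasDD.of_eq
  · repeat' first
      | exact hp | exact ha | exact hb | exact HasDD.const _
      | apply HasDD.sub | apply HasDD.add | apply HasDD.mul
  · ring

/-- Derivative of the mixed potential along the Euler field. -/
theorem hasDD_potMixed (hp : HasDD A p x (p x ^ 2)) (hz : HasDD A z x (y x))
    (hy : HasDD A y x t) :
    HasDD A (fun w => potMixed (p w) (z w) (y w)) x
      (1 / 3 * p x ^ 2 * z x ^ 2 + 2 / 3 * p x * z x * y x - 2 / 3 * (y x ^ 2 + z x * t)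
        - 4 / 3 * z x * y x) := by
  simp only [potMixed]
  apply HasDD.of_eq
  · repeat' first
      | exact hp | exact hz | exact hy | exact HasDD.const _
      | apply HasDD.sub | apply HasDD.add | apply HasDD.mul
  · ring

/-- Derivative of the angular potential along a field that annihilates radial functions. -/
theorem hasDD_potAngular (hp : HasDD A p x 0) (ha : HasDD A a x (z x)) (hb : HasDD A b x (y x))
    (hc : HasDD A c x t) (hz : HasDD A z x ℓ) :
    HasDD A (fun w => potAngular (p w) (a w) (b w) (c w) (z w)) x
      (let w1 := b x + 1 / 2 * p x * a x
       let w2 := c x + p x * b x + 3 / 4 * p x ^ 2 * a x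
       2 / 3 * ((t + p x * y x + 3 / 4 * p x ^ 2 * z x) * z x + w2 * ℓ)
        + 4 / 3 * ((y x + 1 / 2 * p x * z x) * z x + w1 * ℓ)
        - 2 * p x * ((y x + 1 / 2 * p x * z x) * z x + w1 * ℓ)
        - 2 * p x * (z x ^ 2 + a x * ℓ) - 1 / 2 * p x ^ 2 * (z x ^ 2 + a x * ℓ)) := by
  simp only [potAngular]
  apply HasDD.of_eq
  · repeat' first
      | exact hp | exact ha | exact hb | exact hc | exact hz | exact HasDD.const _
      | apply HasDD.sub | apply HasDD.add | apply HasDD.mul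
  · ring

end potentials

/-- The pointwise inequality: modulo divergences, the integrand is a sum of squares when
`0 ≤ p ≤ 1`. The variables stand for `p = 1 / E₁`, `a = u`, `b` and `c` the first and second Euler
derivatives of `u`, and, for each angular field, `z`, `l` the first and second derivatives of `u`
along it and `y`, `t` the first and second Euler derivatives of `z`. The right-hand side is
`‖x‖ ^ 4` times the integrand; `DF`, `DG` and `LF` are the derivatives of `potRadial`, `potMixed`
and `potAngular`. -/
theorem pointwise_sos (p a b c z1 y1 t1 l1 z2 y2 t2 l2 z3 y3 t3 l3 : ℝ) (hp0 : 0 ≤ p)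
    (hp1 : p ≤ 1) :
    let w1 := b + 1 / 2 * p * a
    let w1' := c + 1 / 2 * (p ^ 2 * a + p * b)
    let w2 := c + p * b + 3 / 4 * p ^ 2 * a
    let DF := 4 / 3 * w1 * w1' - p ^ 2 * w1 ^ 2 - 2 * p * w1 * w1'
        - 2 * (p ^ 2 * a * w1 + p * b * w1 + p * a * w1')
        - 2 * p ^ 2 * a ^ 2 - 4 * p * a * b
        - p ^ 3 * a * w1 - 1 / 2 * p ^ 2 * (b * w1 + a * w1')
        + p ^ 3 * a ^ 2 + p ^ 2 * a * b
        - 3 * p ^ 4 * a ^ 2 - 2 * p ^ 3 * a * b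
    let DG := fun z y t : ℝ => 1 / 3 * p ^ 2 * z ^ 2 + 2 / 3 * p * z * y
        - 2 / 3 * (y ^ 2 + z * t) - 4 / 3 * z * y
    let LF := fun z y t l : ℝ => 2 / 3 * ((t + p * y + 3 / 4 * p ^ 2 * z) * z + w2 * l)
        + 4 / 3 * ((y + 1 / 2 * p * z) * z + w1 * l)
        - 2 * p * ((y + 1 / 2 * p * z) * z + w1 * l)
        - 2 * p * (z ^ 2 + a * l) - 1 / 2 * p ^ 2 * (z ^ 2 + a * l)
    DF + (DG z1 y1 t1 + LF z1 y1 t1 l1) + (DG z2 y2 t2 + LF z2 y2 t2 l2)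
        + (DG z3 y3 t3 + LF z3 y3 t3 l3) ≤
      (c + 2 * b + (l1 + l2 + l3)) ^ 2 - p ^ 2 * a ^ 2
        - 2 / 3 * (w2 + 2 * w1 + (l1 + l2 + l3)) ^ 2 := by
  intro w1 w1' w2 DF DG LF
  rw [← sub_nonneg]
  have key : (c + 2 * b + (l1 + l2 + l3)) ^ 2 - p ^ 2 * a ^ 2
        - 2 / 3 * (w2 + 2 * w1 + (l1 + l2 + l3)) ^ 2 -
      (DF + (DG z1 y1 t1 + LF z1 y1 t1 l1) + (DG z2 y2 t2 + LF z2 y2 t2 l2)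
        + (DG z3 y3 t3 + LF z3 y3 t3 l3)) =
      1 / 3 * (w2 ^ 2 + 4 * ((1 - p) * w1 ^ 2) + 2 * ((y1 + 1 / 2 * p * z1) ^ 2
        + (y2 + 1 / 2 * p * z2) ^ 2 + (y3 + 1 / 2 * p * z3) ^ 2) + (l1 + l2 + l3) ^ 2)
      + 4 / 3 * (p * (z1 ^ 2 + z2 ^ 2 + z3 ^ 2))
      + p ^ 2 * (1 / 2 * (z1 ^ 2 + z2 ^ 2 + z3 ^ 2) + 3 / 2 * (w1 + p * a) ^ 2)
      + 9 / 16 * p ^ 4 * a ^ 2 := by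
    simp only [w1, w1', w2, DF, DG, LF]
    ring
  rw [key]
  have h1 : 0 ≤ 1 - p := sub_nonneg.2 hp1
  positivity

/-! ### The inequality -/

/-- The potentials of smooth functions supported in `K` are smooth and supported in `K`, even though
the coefficient `p` is smooth only at the points of `K`. -/
theorem Adm.potentials {K : Set (EuclideanSpace ℝ (Fin 4))} (hK : IsClosed K)
    {p a b c z y : EuclideanSpace ℝ (Fin 4) → ℝ} (hp : ∀ x ∈ K, ContDiffAt ℝ (⊤ : ℕ∞) p x)
    (ha : Adm K a) (hb : Adm K b) (hc : Adm K c) (hz : Adm K z) (hy : Adm K y) :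
    Adm K (fun w => potRadial (p w) (a w) (b w)) ∧ Adm K (fun w => potMixed (p w) (z w) (y w)) ∧
      Adm K (fun w => potAngular (p w) (a w) (b w) (c w) (z w)) := by
  simp only [potRadial, potMixed, potAngular]
  refine ⟨?_, ?_, ?_⟩ <;>
  · repeat' first
      | exact hp | exact ha | exact hb | exact hc | exact hz | exact hy
      | apply Adm.sub | apply Adm.add | apply Adm.const_mul | apply Adm.wmul hK hp | apply Adm.mul

theorem E1_ge_one {t R : ℝ} (ht : 0 < t) (hR : t ≤ R) : 1 ≤ E1 (t / R) := by
  have := Real.log_nonpos (div_pos ht (ht.trans_le hR)).le ((div_le_one (ht.trans_le hR)).2 hR)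
  rw [E1]
  linarith

/-- The inequality for a smooth `u` vanishing off a compact `K` that is contained in the closed ball
of radius `R` and avoids the origin, with integrals over the whole space. -/
theorem whole_space {K : Set (EuclideanSpace ℝ (Fin 4))} (hK : IsCompact K) {R : ℝ}
    (hKR : ∀ x ∈ K, x ≠ 0 ∧ ‖x‖ ≤ R) {u : EuclideanSpace ℝ (Fin 4) → ℝ} (hu : Adm K u) :
    Adm K (fun y => (E1 (‖y‖ / R)) ^ (-(1 / 2) : ℝ) * u y) ∧
    2 / 3 * ∫ x, E1 (‖x‖ / R) *
        (lap (fun y => (E1 (‖y‖ / R)) ^ (-(1 / 2) : ℝ) * u y) x) ^ 2 ≤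
      (∫ x, (lap u x) ^ 2) - ∫ x, (u x) ^ 2 / (‖x‖ ^ 4 * (E1 (‖x‖ / R)) ^ 2) := by
  have hKc := hK.isClosed
  have hn {x} (hx : x ∈ K) : 0 < ‖x‖ := norm_pos_iff.2 (hKR x hx).1
  have hR {x} (hx : x ∈ K) : 0 < R := (hn hx).trans_le (hKR x hx).2
  set s : EuclideanSpace ℝ (Fin 4) → ℝ := fun x => E1 (‖x‖ / R) with hs
  set p : EuclideanSpace ℝ (Fin 4) → ℝ := fun x => (s x)⁻¹ with hp
  set q : EuclideanSpace ℝ (Fin 4) → ℝ := fun x => (s x) ^ (-(1 / 2) : ℝ) with hq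
  set ρ : EuclideanSpace ℝ (Fin 4) → ℝ := fun x => (‖x‖ ^ 4)⁻¹ with hρ
  have hs1 {x} (hx : x ∈ K) : 1 ≤ s x := E1_ge_one (hn hx) (hKR x hx).2
  have hs0 {x} (hx : x ∈ K) : 0 < s x := one_pos.trans_le (hs1 hx)
  -- regularity of the weights
  have hsc : ∀ x ∈ K, ContDiffAt ℝ (⊤ : ℕ∞) s x := fun x hx => contDiffAt_E1 (hR hx) (hKR x hx).1
  have hpc : ∀ x ∈ K, ContDiffAt ℝ (⊤ : ℕ∞) p x := fun x hx => (hsc x hx).inv (hs0 hx).ne'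
  have hqc : ∀ x ∈ K, ContDiffAt ℝ (⊤ : ℕ∞) q x := fun x hx =>
    (hsc x hx).rpow_const_of_ne (hs0 hx).ne'
  have hρc : ∀ x ∈ K, ContDiffAt ℝ (⊤ : ℕ∞) ρ x := fun x hx => contDiffAt_density (hKR x hx).1
  -- derivatives of the weights along a field with `⟪x, A x⟫ = κ ‖x‖ ^ 2`
  have hder {A : EuclideanSpace ℝ (Fin 4) →L[ℝ] EuclideanSpace ℝ (Fin 4)} {κ : ℝ}
      (hA : ∀ x, inner ℝ x (A x) = κ * ‖x‖ ^ 2) {x} (hx : x ∈ K) :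
      HasDD A p x (κ * p x ^ 2) ∧ HasDD A q x (κ * (1 / 2 * p x * q x)) ∧
        HasDD A ρ x (-(4 * κ) * ρ x) := by
    have hx2 : ‖x‖ ^ 2 ≠ 0 := pow_ne_zero 2 (hn hx).ne'
    have hsd : HasDD A s x (-κ) := (hasDD_E1 A (hR hx) (hKR x hx).1).of_eq (by
      rw [hA, mul_div_assoc, div_self hx2, mul_one])
    refine ⟨?_, ?_, ?_⟩
    · refine (HasDD.comp (φ := fun t => t⁻¹) (hasDerivAt_inv (hs0 hx).ne') hsd).of_eq ?_
      simp only [hp, inv_pow]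
      ring
    · refine (HasDD.comp (φ := fun t => t ^ (-(1 / 2) : ℝ))
        (Real.hasDerivAt_rpow_const (Or.inl (hs0 hx).ne')) hsd).of_eq ?_
      rw [Real.rpow_sub_one (hs0 hx).ne']
      simp only [hp, hq]
      ring
    · refine (hasDD_density A (hKR x hx).1).of_eq ?_
      rw [hA, ← mul_assoc, mul_div_assoc, div_self hx2, mul_one]
  have hA0 (x : EuclideanSpace ℝ (Fin 4)) : inner ℝ x (J0 x) = 1 * ‖x‖ ^ 2 := by simp
  have hA1 (x : EuclideanSpace ℝ (Fin 4)) : inner ℝ x (J1 x) = 0 * ‖x‖ ^ 2 := by simp [inner_J1]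
  have hA2 (x : EuclideanSpace ℝ (Fin 4)) : inner ℝ x (J2 x) = 0 * ‖x‖ ^ 2 := by simp [inner_J2]
  have hA3 (x : EuclideanSpace ℝ (Fin 4)) : inner ℝ x (J3 x) = 0 * ‖x‖ ^ 2 := by simp [inner_J3]
  have hqq {x} (hx : x ∈ K) : s x * q x ^ 2 = 1 := by
    simp only [hq]
    rw [← Real.rpow_natCast, ← Real.rpow_mul (hs0 hx).le]
    norm_num
    rw [Real.rpow_neg_one, mul_inv_cancel₀ (hs0 hx).ne']
  -- derivatives of weighted functions, as identities on the whole space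
  have hqmul {A : EuclideanSpace ℝ (Fin 4) →L[ℝ] EuclideanSpace ℝ (Fin 4)} {κ : ℝ}
      (hA : ∀ x, inner ℝ x (A x) = κ * ‖x‖ ^ 2) {g : EuclideanSpace ℝ (Fin 4) → ℝ}
      (hg : Adm K g) : dd A (fun y => q y * g y) =
        fun y => q y * (dd A g y + κ * (1 / 2 * (p y * g y))) := by
    funext x
    by_cases hx : x ∈ K
    · rw [((hder hA hx).2.1.mul (hg.hasDD A x)).dd_eq]
      ring
    · simp [((hg.wmul hKc hqc).dd hKc A).2 x hx, (hg.dd hKc A).2 x hx, hg.2 x hx]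
  set b := dd J0 u with hb_def
  set c := dd J0 b with hc_def
  have hb : Adm K b := hu.dd hKc J0
  have hc : Adm K c := hb.dd hKc J0
  have hv : Adm K (fun y => q y * u y) := hu.wmul hKc hqc
  have hpu : Adm K (fun y => p y * u y) := hu.wmul hKc hpc
  have hw1 : Adm K (fun y => b y + 1 * (1 / 2 * (p y * u y))) :=
    hb.add ((hpu.const_mul (1 / 2)).const_mul 1)
  have hangv {A : EuclideanSpace ℝ (Fin 4) →L[ℝ] EuclideanSpace ℝ (Fin 4)}
      (hA : ∀ x, inner ℝ x (A x) = 0 * ‖x‖ ^ 2) :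
      dd A (dd A (fun y => q y * u y)) = fun y => q y * dd A (dd A u) y := by
    have h1 : dd A (fun y => q y * u y) = fun y => q y * dd A u y := by
      rw [hqmul hA hu]; simp
    rw [h1, hqmul hA (hu.dd hKc A)]
    simp
  have hlapv {x} (hx : x ∈ K) : ‖x‖ ^ 2 * lap (fun y => q y * u y) x =
      q x * ((c x + p x * b x + 3 / 4 * p x ^ 2 * u x) + 2 * (b x + 1 / 2 * p x * u x) +
        (dd J1 (dd J1 u) x + dd J2 (dd J2 u) x + dd J3 (dd J3 u) x)) := by
    have hdw : dd J0 (fun y => b y + 1 * (1 / 2 * (p y * u y))) x =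
        c x + 1 / 2 * (p x ^ 2 * u x + p x * b x) :=
      (((hb.hasDD J0 x).add ((HasDD.const 1).mul ((HasDD.const (1 / 2)).mul
        ((hder hA0 hx).1.mul (hu.hasDD J0 x))))).of_eq (by ring)).dd_eq
    rw [lap_frame hv.1, hangv hA1, hangv hA2, hangv hA3, hqmul hA0 hu, hqmul hA0 hw1]
    simp only [hdw]
    ring
  -- the divergence terms and their integrals
  have hpot {A : EuclideanSpace ℝ (Fin 4) →L[ℝ] EuclideanSpace ℝ (Fin 4)} :=
    Adm.potentials hKc hpc hu hb hc (hu.dd hKc A) ((hu.dd hKc A).dd hKc J0)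
  set F := fun w => potRadial (p w) (u w) (b w) with hF
  set G := fun (A : EuclideanSpace ℝ (Fin 4) →L[ℝ] EuclideanSpace ℝ (Fin 4)) w =>
    potMixed (p w) (dd A u w) (dd J0 (dd A u) w) with hG
  set L := fun (A : EuclideanSpace ℝ (Fin 4) →L[ℝ] EuclideanSpace ℝ (Fin 4)) w =>
    potAngular (p w) (u w) (b w) (c w) (dd A u w) with hL
  have hFA : Adm K F := (hpot (A := J0)).1
  have hGA (A) : Adm K (G A) := (hpot (A := A)).2.1
  have hLA (A) : Adm K (L A) := (hpot (A := A)).2.2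
  have hint0 {g} (hg : Adm K g) : Integrable (fun x => ρ x * dd J0 g x) ∧
      ∫ x, ρ x * dd J0 g x = 0 :=
    ⟨((hg.dd hKc J0).wmul hKc hρc).integrable hK,
      integral_mul_dd hK hg trace_J0 hρc fun x hx => by simpa using (hder hA0 hx).2.2⟩
  have hint {A : EuclideanSpace ℝ (Fin 4) →L[ℝ] EuclideanSpace ℝ (Fin 4)}
      (hA : ∀ x, inner ℝ x (A x) = 0 * ‖x‖ ^ 2)
      (ht : ∑ i, A (EuclideanSpace.single i 1) i = 0) :
      Integrable (fun x => ρ x * dd J0 (G A) x + ρ x * dd A (L A) x) ∧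
      ∫ x, (ρ x * dd J0 (G A) x + ρ x * dd A (L A) x) = 0 := by
    have h1 := hint0 (hGA A)
    have h2 : Integrable (fun x => ρ x * dd A (L A) x) :=
      (((hLA A).dd hKc A).wmul hKc hρc).integrable hK
    refine ⟨h1.1.add h2, ?_⟩
    rw [integral_add h1.1 h2, h1.2, integral_mul_dd hK (hLA A) ht hρc
      fun x hx => by simpa using (hder hA hx).2.2]
    simp
  have hi0 := hint0 hFA
  have hi1 := hint hA1 trace_J1
  have hi2 := hint hA2 trace_J2
  have hi3 := hint hA3 trace_J3
  -- integrability of the three integrands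
  have hI1 : Integrable fun x => (lap u x) ^ 2 := by
    simpa only [sq] using ((hu.lap hKc).mul (hu.lap hKc)).integrable hK
  have hI2 : Integrable fun x => s x * (lap (fun y => q y * u y) x) ^ 2 := by
    simpa only [sq] using (((hv.lap hKc).mul (hv.lap hKc)).wmul hKc hsc).integrable hK
  have hI3 : Integrable fun x => (u x) ^ 2 / (‖x‖ ^ 4 * (s x) ^ 2) := by
    have h := (((hpu.mul hpu).wmul hKc hρc)).integrable hK
    refine h.congr (Filter.Eventually.of_forall fun x => ?_)
    simp only [hρ, hp, div_eq_mul_inv, mul_inv, sq]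
    ring
  refine ⟨hv, ?_⟩
  have hmono : ∫ x, (ρ x * dd J0 F x + (ρ x * dd J0 (G J1) x + ρ x * dd J1 (L J1) x)
      + (ρ x * dd J0 (G J2) x + ρ x * dd J2 (L J2) x)
      + (ρ x * dd J0 (G J3) x + ρ x * dd J3 (L J3) x)) ≤
      ∫ x, ((lap u x) ^ 2 - (u x) ^ 2 / (‖x‖ ^ 4 * (s x) ^ 2)
        - 2 / 3 * (s x * (lap (fun y => q y * u y) x) ^ 2)) := by
    refine integral_mono (((hi0.1.add hi1.1).add hi2.1).add hi3.1)
      ((hI1.sub hI3).sub (hI2.const_mul (2 / 3))) fun x => ?_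
    by_cases hx : x ∈ K
    · have hang {A : EuclideanSpace ℝ (Fin 4) →L[ℝ] EuclideanSpace ℝ (Fin 4)}
          (hA : ∀ x, inner ℝ x (A x) = 0 * ‖x‖ ^ 2) :=
        And.intro
          (show dd J0 (G A) x = _ from (hasDD_potMixed ((hder hA0 hx).1.of_eq (one_mul _))
            ((hu.dd hKc A).hasDD J0 x)
            (((hu.dd hKc A).dd hKc J0).hasDD J0 x)).dd_eq)
          (show dd A (L A) x = _ from (hasDD_potAngular (b := b) (c := c)
            ((hder hA hx).1.of_eq (zero_mul _)) (hu.hasDD A x)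
            ((hb.hasDD A x).of_eq (congrFun (dd_J0_comm hu.1 A) x))
            ((hc.hasDD A x).of_eq (congrFun ((dd_J0_comm hb.1 A).trans
              (congrArg (dd J0) (dd_J0_comm hu.1 A))) x))
            ((hu.dd hKc A).hasDD A x)).dd_eq)
      have hsos := pointwise_sos (p x) (u x) (b x) (c x)
        (dd J1 u x) (dd J0 (dd J1 u) x) (dd J0 (dd J0 (dd J1 u)) x) (dd J1 (dd J1 u) x)
        (dd J2 u x) (dd J0 (dd J2 u) x) (dd J0 (dd J0 (dd J2 u)) x) (dd J2 (dd J2 u) x)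
        (dd J3 u x) (dd J0 (dd J3 u) x) (dd J0 (dd J0 (dd J3 u)) x) (dd J3 (dd J3 u) x)
        (inv_nonneg.2 (hs0 hx).le) (inv_le_one_of_one_le₀ (hs1 hx))
      have hdF : dd J0 F x = _ := (hasDD_potRadial (b := b) (c' := c x)
        ((hder hA0 hx).1.of_eq (one_mul _))
        (hu.hasDD J0 x) (hb.hasDD J0 x)).dd_eq
      have hd1 := hang hA1
      have hd2 := hang hA2
      have hd3 := hang hA3
      simp only [] at hsos hdF hd1 hd2 hd3
      have hρ0 : 0 ≤ ρ x := by positivity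
      have hfin := mul_le_mul_of_nonneg_left hsos hρ0
      have hρn : ρ x * (‖x‖ ^ 2) ^ 2 = 1 := by
        have := (hn hx).ne'
        simp only [hρ]
        field_simp
      have e1 : (lap u x) ^ 2 = ρ x * (‖x‖ ^ 2 * lap u x) ^ 2 := by
        linear_combination (-(lap u x) ^ 2) * hρn
      have e2 : s x * (lap (fun y => q y * u y) x) ^ 2 = ρ x *
          ((c x + p x * b x + 3 / 4 * p x ^ 2 * u x) + 2 * (b x + 1 / 2 * p x * u x) +
            (dd J1 (dd J1 u) x + dd J2 (dd J2 u) x + dd J3 (dd J3 u) x)) ^ 2 := by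
        have hl := hlapv hx
        have hq2 := hqq hx
        generalize (c x + p x * b x + 3 / 4 * p x ^ 2 * u x) + 2 * (b x + 1 / 2 * p x * u x) +
            (dd J1 (dd J1 u) x + dd J2 (dd J2 u) x + dd J3 (dd J3 u) x) = W at hl ⊢
        generalize lap (fun y => q y * u y) x = L at hl ⊢
        linear_combination (-(s x) * L ^ 2) * hρn + s x * ρ x * (‖x‖ ^ 2 * L + q x * W) * hl
          + ρ x * W ^ 2 * hq2
      have e3 : (u x) ^ 2 / (‖x‖ ^ 4 * (s x) ^ 2) = ρ x * (p x ^ 2 * u x ^ 2) := by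
        simp only [hρ, hp, div_eq_mul_inv, mul_inv, sq]
        ring
      have hlu : ‖x‖ ^ 2 * lap u x = c x + 2 * b x +
          (dd J1 (dd J1 u) x + dd J2 (dd J2 u) x + dd J3 (dd J3 u) x) := lap_frame hu.1 x
      simp only []
      rw [e1, e2, e3, hlu, hd1.1, hd1.2, hd2.1, hd2.2, hd3.1, hd3.2, hdF]
      refine le_trans (le_of_eq ?_) (hfin.trans (le_of_eq ?_)) <;> ring
    · simp [(hFA.dd hKc J0).2 x hx, ((hGA J1).dd hKc J0).2 x hx, ((hGA J2).dd hKc J0).2 x hx,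
        ((hGA J3).dd hKc J0).2 x hx, ((hLA J1).dd hKc J1).2 x hx, ((hLA J2).dd hKc J2).2 x hx,
        ((hLA J3).dd hKc J3).2 x hx, (hu.lap hKc).2 x hx, (hv.lap hKc).2 x hx, hu.2 x hx]
  have hi01 : Integrable fun x => ρ x * dd J0 F x +
      (ρ x * dd J0 (G J1) x + ρ x * dd J1 (L J1) x) := hi0.1.add hi1.1
  have hi012 : Integrable fun x => ρ x * dd J0 F x +
      (ρ x * dd J0 (G J1) x + ρ x * dd J1 (L J1) x) +
      (ρ x * dd J0 (G J2) x + ρ x * dd J2 (L J2) x) := hi01.add hi2.1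
  have hI13 : Integrable fun x => (lap u x) ^ 2 - (u x) ^ 2 / (‖x‖ ^ 4 * (s x) ^ 2) := hI1.sub hI3
  rw [integral_add hi012 hi3.1, integral_add hi01 hi2.1, integral_add hi0.1 hi1.1,
    hi0.2, hi1.2, hi2.2, hi3.2, integral_sub hI13 (hI2.const_mul (2 / 3)),
    integral_sub hI1 hI3, integral_const_mul] at hmono
  linarith

/-- Ground state representation estimate (Proposition 1). -/
theorem stmt6 (Ω : Set (EuclideanSpace ℝ (Fin 4))) (hopen : IsOpen Ω) (hconn : IsConnected Ω)
    (hbdd : Bornology.IsBounded Ω) (h0 : (0 : EuclideanSpace ℝ (Fin 4)) ∈ Ω)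
    (R : ℝ) (hR : ∀ x ∈ Ω, ‖x‖ ≤ R)
    (u : EuclideanSpace ℝ (Fin 4) → ℝ) (hsmooth : ContDiff ℝ (⊤ : ℕ∞) u)
    (hcpt : HasCompactSupport u) (hsupp : tsupport u ⊆ Ω \ {0}) :
    2 / 3 * ∫ x in Ω, E1 (‖x‖ / R) *
        (lap (fun y => (E1 (‖y‖ / R)) ^ (-(1 / 2) : ℝ) * u y) x) ^ 2 ≤
      (∫ x in Ω, (lap u x) ^ 2) -
        ∫ x in Ω, (u x) ^ 2 / (‖x‖ ^ 4 * (E1 (‖x‖ / R)) ^ 2) := by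
  have hKR : ∀ x ∈ tsupport u, x ≠ 0 ∧ ‖x‖ ≤ R := fun x hx =>
    ⟨fun h => (hsupp hx).2 h, hR x (hsupp hx).1⟩
  have hu : Adm (tsupport u) u := ⟨hsmooth, fun x hx => image_eq_zero_of_notMem_tsupport hx⟩
  have hK : IsClosed (tsupport u) := isClosed_tsupport u
  obtain ⟨hv, h⟩ := whole_space hcpt hKR hu
  have hΩ {x} (hx : x ∉ Ω) : x ∉ tsupport u := fun h => hx (hsupp h).1
  rw [setIntegral_eq_integral_of_forall_compl_eq_zero,
    setIntegral_eq_integral_of_forall_compl_eq_zero,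
    setIntegral_eq_integral_of_forall_compl_eq_zero]
  · exact h
  · exact fun x hx => by simp [hu.2 x (hΩ hx)]
  · exact fun x hx => by simp [(hu.lap hK).2 x (hΩ hx)]
  · intro x hx
    have h' := (hv.lap hK).2 x (hΩ hx)
    simp only [h']
    simp
end

section
/- Let B be the open unit ball in ℝ⁴ centered at the origin, let R ≥ 1 and set a := 1 + ln R. Then for every radial function u ∈ C₀^∞(B \ {0}), setting v(x) := E₁(|x|/R)^{−1/2} · u(x), one has ∫_B (Δu)² dx − ∫_B u(x)² / ( |x|⁴ · E₁(|x|/R)² ) dx ≥ (2a/(2a+1)) · ∫_B E₁(|x|/R) · (Δv)² dx. -/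
/-!
With `s = E₁(|x|/R) = a - log |x|`, the unit ball becomes the half-line `s > a`, `dx / |x|⁴` becomes
a multiple of `ds`, and `|x|² Δ` acts on radial functions as `F ↦ F'' - 2 F'` (`lap_comp_log`,
`exists_polar`). Writing `U` and `V = s^(-1/2) U` for the profiles of `u` and `v`, integration by
parts gives

`∫ (U'' - 2 U')² - U² / s² = ∫ s V''² + 4 s V'² + (3/2) V'² / s - (15/16) V² / s³`,
`∫ s (V'' - 2 V')² = ∫ s V''² + 4 s V'² + 2 V'²`.

The last two terms of the first line have nonnegative integral by the Hardy inequality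
`∫ V² / s³ ≤ ∫ V'² / s`, and `2 V'² ≤ (2 / a) s V'²` since `s ≥ a`; hence the constant
`4 / (4 + 2 / a) = 2 a / (2 a + 1)`. The lemma `oneD` does all this at once, as a pointwise
inequality modulo the derivative of a compactly supported function.
-/

open MeasureTheory Real

/-- The inequality in the variable `s = a - log r`, where `U = √s V` are the profiles of `u` and
`v`. The difference of the integrands is the derivative of a compactly supported function plus a
quadratic form in `V`, `V'`, `V''` that is nonnegative for `s ≥ a`. -/
lemma oneD {a c : ℝ} (ha : 1 ≤ a) (hc : c = 2 * a / (2 * a + 1)) {U V : ℝ → ℝ}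
    (hU : ContDiff ℝ (⊤ : ℕ∞) U) (hV : ContDiff ℝ (⊤ : ℕ∞) V) {K : Set ℝ} (hK : IsCompact K)
    (hKa : K ⊆ Set.Ioi a) (hV0 : ∀ s ∉ K, V s = 0) (hU0 : ∀ s ∉ K, U s = 0)
    (hUV : ∀ s, 0 < s → U s = √s * V s) :
    c * ∫ s, s * (deriv (deriv V) s - 2 * deriv V s) ^ 2 ≤
      (∫ s, (deriv (deriv U) s - 2 * deriv U s) ^ 2) - ∫ s, U s ^ 2 / s ^ 2 := by
  have hev : ∀ W : ℝ → ℝ, (∀ s ∉ K, W s = 0) → ∀ s ∉ K, W =ᶠ[nhds s] 0 := fun W hW s hs =>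
    Filter.eventually_of_mem (hK.isClosed.isOpen_compl.mem_nhds hs) hW
  have hder : ∀ W : ℝ → ℝ, (∀ s ∉ K, W s = 0) → ∀ s ∉ K, deriv W s = 0 := fun W hW s hs => by
    rw [(hev W hW s hs).deriv_eq]; simp
  have hV1 := hder V hV0
  have hV2 := hder _ hV1
  have hU1 := hder U hU0
  have hU2 := hder _ hU1
  have sm : ∀ W : ℝ → ℝ, ContDiff ℝ (⊤ : ℕ∞) W → ContDiff ℝ (⊤ : ℕ∞) (deriv W) := fun W hW =>
    (contDiff_infty_iff_deriv.1 hW).2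
  have dV : ∀ s, HasDerivAt V (deriv V s) s := fun s =>
    (hV.differentiable (by simp) s).hasDerivAt
  have dV' : ∀ s, HasDerivAt (deriv V) (deriv (deriv V) s) s := fun s =>
    ((sm _ hV).differentiable (by simp) s).hasDerivAt
  have cV := hV.continuous
  have cV1 := (sm _ hV).continuous
  have cV2 := (sm _ (sm _ hV)).continuous
  have cU := hU.continuous
  have cU1 := (sm _ hU).continuous
  have cU2 := (sm _ (sm _ hU)).continuous
  have hK0 : ∀ s ∈ K, 0 < s := fun s hs => by have := hKa hs; simp at this; linarith
  have hint : ∀ h : ℝ → ℝ, ContinuousOn h (Set.Ioi 0) → (∀ s ∉ K, h s = 0) → Integrable h := by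
    intro h hh h0
    refine (integrableOn_iff_integrable_of_support_subset (s := K) fun s hs => ?_).1
      ((hh.mono hK0).integrableOn_compact hK)
    by_contra hn
    exact hs (h0 s hn)
  have eU1 : ∀ s, 0 < s → deriv U s = √s * deriv V s + V s / (2 * √s) := by
    intro s hs
    have : U =ᶠ[nhds s] fun s => √s * V s :=
      Filter.eventually_of_mem (Ioi_mem_nhds hs) hUV
    have h : HasDerivAt (fun s => √s * V s) _ s := (Real.hasDerivAt_sqrt hs.ne').mul (dV s)
    rw [this.deriv_eq, h.deriv]
    ring
  have eU2 : ∀ s, 0 < s →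
      deriv (deriv U) s = √s * deriv (deriv V) s + deriv V s / √s - V s / (4 * (s * √s)) := by
    intro s hs
    have : deriv U =ᶠ[nhds s] fun s => √s * deriv V s + V s / (2 * √s) :=
      Filter.eventually_of_mem (Ioi_mem_nhds hs) eU1
    have hq : 0 < √s := Real.sqrt_pos.2 hs
    have hd := Real.hasDerivAt_sqrt hs.ne'
    have h : HasDerivAt (fun s => √s * deriv V s + V s / (2 * √s)) _ s :=
      (hd.mul (dV' s)).add ((dV s).div (hd.const_mul 2) (by positivity))
    rw [this.deriv_eq, h.deriv]
    have hss : s = √s ^ 2 := (Real.sq_sqrt hs.le).symm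
    set q := √s
    rw [hss]
    field_simp
    ring
  -- `Φ` collects all integrations by parts: the cross terms of the three squares, and the
  -- total derivative of `V ^ 2 / s ^ 2` in the Hardy identity, where it is the difference of
  -- `V' ^ 2 / s - V ^ 2 / s ^ 3` and `(V' - V / s) ^ 2 / s`. Its derivative is `D`.
  let Φ : ℝ → ℝ := fun s => -2 * (s * deriv V s ^ 2 + V s * deriv V s + V s ^ 2 / (4 * s))
    + 2 * V s ^ 2 + deriv V s ^ 2 - V s * deriv V s / (2 * s) + 7 / 16 * (V s ^ 2 / s ^ 2)
    + c * (2 * (s * deriv V s ^ 2))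
  let D : ℝ → ℝ := fun s =>
    -2 * (deriv V s ^ 2 + s * (2 * deriv V s * deriv (deriv V) s) + deriv V s * deriv V s
      + V s * deriv (deriv V) s + 2 * V s * deriv V s / (4 * s) - V s ^ 2 / (4 * s ^ 2))
    + 4 * V s * deriv V s + 2 * deriv V s * deriv (deriv V) s
    - (deriv V s ^ 2 + V s * deriv (deriv V) s) / (2 * s) + V s * deriv V s / (2 * s ^ 2)
    + 7 / 16 * (2 * V s * deriv V s / s ^ 2 - 2 * V s ^ 2 / s ^ 3)
    + c * (2 * (deriv V s ^ 2 + s * (2 * deriv V s * deriv (deriv V) s)))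
  have hΦ0 : ∀ s ∉ K, Φ s = 0 := fun s hs => by simp [Φ, hV0 s hs, hV1 s hs]
  have hD0 : ∀ s ∉ K, D s = 0 := fun s hs => by simp [D, hV0 s hs, hV1 s hs]
  have hΦD : ∀ s, HasDerivAt Φ (D s) s := by
    intro s
    by_cases hs : s ∈ K
    · have hs0 := hK0 s hs
      have hid := hasDerivAt_id' s
      have h1 := dV s
      have h2 := dV' s
      have := ((((((hid.mul (h2.pow 2)).add (h1.mul h2)).add
        ((h1.pow 2).div (hid.const_mul 4) (by positivity))).const_mul (-2)).add
        ((h1.pow 2).const_mul 2)).add (h2.pow 2)).sub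
        ((h1.mul h2).div (hid.const_mul 2) (by positivity)) |>.add
        (((h1.pow 2).div (hid.pow 2) (pow_pos hs0 2).ne').const_mul (7 / 16)) |>.add
        (((hid.mul (h2.pow 2)).const_mul 2).const_mul c)
      refine this.congr_deriv ?_
      simp only [D, Pi.pow_apply, Pi.mul_apply]
      field_simp
      ring
    · rw [hD0 s hs]
      exact (hasDerivAt_const s (0 : ℝ)).congr_of_eventuallyEq (hev Φ hΦ0 s hs)
  have iΦ : Integrable Φ := hint Φ (fun s hs => by
    have hs' : s ≠ 0 := ne_of_gt hs
    exact (hΦD s).continuousAt.continuousWithinAt) hΦ0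
  have iD : Integrable D := hint D (fun s hs => by
    have hs' : s ≠ 0 := ne_of_gt hs
    have : ContinuousAt D s := by
      simp only [D]
      fun_prop (disch := positivity)
    exact this.continuousWithinAt) hD0
  have i1 : Integrable fun s => (deriv (deriv U) s - 2 * deriv U s) ^ 2 :=
    hint _ (by fun_prop) (fun s hs => by simp [hU1 s hs, hU2 s hs])
  have i3 : Integrable fun s => s * (deriv (deriv V) s - 2 * deriv V s) ^ 2 :=
    hint _ (by fun_prop) (fun s hs => by simp [hV1 s hs, hV2 s hs])
  have i2 : Integrable fun s => U s ^ 2 / s ^ 2 :=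
    hint _ (fun s hs => by
      have hs' : s ≠ 0 := ne_of_gt hs
      have : ContinuousAt (fun s => U s ^ 2 / s ^ 2) s := by
        fun_prop (disch := positivity)
      exact this.continuousWithinAt) (fun s hs => by simp [hU0 s hs])
  have hD := integral_eq_zero_of_hasDerivAt_of_integrable hΦD iD iΦ
  have i12 : Integrable fun s => (deriv (deriv U) s - 2 * deriv U s) ^ 2 - U s ^ 2 / s ^ 2 :=
    i1.sub i2
  rw [← integral_sub i1 i2, ← sub_nonneg, ← integral_const_mul,
    ← integral_sub i12 (i3.const_mul c), ← hD]
  refine integral_mono iD (i12.sub (i3.const_mul c)) fun s => ?_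
  by_cases hs : s ∈ K
  swap
  · simp [hD0 s hs, hU0 s hs, hV1 s hs, hV2 s hs, hU1 s hs, hU2 s hs]
  have hs0 := hK0 s hs
  have hsa : a < s := hKa hs
  have key : (deriv (deriv U) s - 2 * deriv U s) ^ 2 - U s ^ 2 / s ^ 2
      - c * (s * (deriv (deriv V) s - 2 * deriv V s) ^ 2) - D s
      = (1 - c) * (s * deriv (deriv V) s ^ 2) + (4 * (1 - c) * s - 2 * c) * deriv V s ^ 2
        + 9 / 16 * (deriv V s ^ 2 / s) + 15 / 16 * ((deriv V s - V s / s) ^ 2 / s) := by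
    rw [eU1 s hs0, eU2 s hs0, hUV s hs0]
    have hq : 0 < √s := Real.sqrt_pos.2 hs0
    have hss : s = √s ^ 2 := (Real.sq_sqrt hs0.le).symm
    simp only [D]
    generalize deriv (deriv V) s = X
    generalize deriv V s = Y
    generalize V s = Z
    generalize √s = q at *
    subst hss
    field_simp
    ring
  have c1 : 0 ≤ 1 - c := by
    rw [hc, one_sub_div (by positivity)]; apply div_nonneg <;> linarith
  have c2 : 0 ≤ 4 * (1 - c) * s - 2 * c := by
    -- the value of `c` is exactly the one making this coefficient vanish at `s = a`
    have : 4 * (1 - c) * a - 2 * c = 0 := by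
      rw [hc]; field_simp; ring
    nlinarith
  have : 0 ≤ (1 - c) * (s * deriv (deriv V) s ^ 2) + (4 * (1 - c) * s - 2 * c) * deriv V s ^ 2
        + 9 / 16 * (deriv V s ^ 2 / s) + 15 / 16 * ((deriv V s - V s / s) ^ 2 / s) := by
    positivity
  simp only
  linarith

lemma hasFDerivAt_const_sub_log_norm (a : ℝ) {x : EuclideanSpace ℝ (Fin 4)} (hx : x ≠ 0) :
    HasFDerivAt (fun y : EuclideanSpace ℝ (Fin 4) => a - Real.log ‖y‖)
      (-(‖x‖ ^ 2)⁻¹ • innerSL ℝ x) x := by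
  have hn : ‖x‖ ^ 2 ≠ 0 := by simpa using hx
  have h := (((hasStrictFDerivAt_norm_sq x).hasFDerivAt.log hn).const_mul (1 / 2)).const_sub a
  have e : (fun y : EuclideanSpace ℝ (Fin 4) => a - Real.log ‖y‖)
      = fun y => a - 1 / 2 * Real.log (‖y‖ ^ 2) := by
    ext y
    rw [Real.log_pow]; push_cast; ring
  rw [e]
  refine h.congr_fderiv ?_
  ext v
  simp
  ring

/-- In dimension four, `r² Δ = F'' - 2 F'` for radial functions written in the variable
`s = a - log r`. The value of `f` at the origin plays no role. -/
lemma lap_comp_log (a : ℝ) {F : ℝ → ℝ} (hF : ContDiff ℝ (⊤ : ℕ∞) F)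
    {x : EuclideanSpace ℝ (Fin 4)} (hx : x ≠ 0) {f : EuclideanSpace ℝ (Fin 4) → ℝ}
    (hf : ∀ y, y ≠ 0 → f y = F (a - Real.log ‖y‖)) :
    lap f x = (deriv (deriv F) (a - Real.log ‖x‖) - 2 * deriv F (a - Real.log ‖x‖)) / ‖x‖ ^ 2 := by
  have hF' : ContDiff ℝ (⊤ : ℕ∞) (deriv F) := (contDiff_infty_iff_deriv.1 hF).2
  have hne : ∀ y : EuclideanSpace ℝ (Fin 4), y ≠ 0 → ∀ᶠ z in nhds y, z ≠ 0 := fun y hy =>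
    isOpen_ne.mem_nhds hy
  have h1 : ∀ y, y ≠ 0 → ∀ i : Fin 4, fderiv ℝ f y (EuclideanSpace.single i 1)
      = deriv F (a - Real.log ‖y‖) * (-(‖y‖ ^ 2)⁻¹ * y i) := by
    intro y hy i
    have e : f =ᶠ[nhds y] fun z => F (a - Real.log ‖z‖) := (hne y hy).mono hf
    have hd := (hF.differentiable (by simp) (a - Real.log ‖y‖)).hasDerivAt.comp_hasFDerivAt y
      (hasFDerivAt_const_sub_log_norm a hy)
    have hd' : HasFDerivAt (fun z => F (a - Real.log ‖z‖)) _ y := hd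
    rw [e.fderiv_eq, hd'.fderiv]
    simp [EuclideanSpace.inner_single_right]
  have hn : ‖x‖ ^ 2 ≠ 0 := by simpa using hx
  have h2 : ∀ i : Fin 4, fderiv ℝ (fun y => fderiv ℝ f y (EuclideanSpace.single i 1)) x
      (EuclideanSpace.single i 1)
      = deriv (deriv F) (a - Real.log ‖x‖) * (x i ^ 2 / (‖x‖ ^ 2) ^ 2)
        + deriv F (a - Real.log ‖x‖) * (2 * x i ^ 2 / (‖x‖ ^ 2) ^ 2 - 1 / ‖x‖ ^ 2) := by
    intro i
    have e : (fun y => fderiv ℝ f y (EuclideanSpace.single i 1)) =ᶠ[nhds x]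
        fun y => deriv F (a - Real.log ‖y‖) * (-(‖y‖ ^ 2)⁻¹ * y i) :=
      (hne x hx).mono fun y hy => h1 y hy i
    have d1 : HasFDerivAt (fun z => deriv F (a - Real.log ‖z‖)) _ x :=
      (hF'.differentiable (by simp) (a - Real.log ‖x‖)).hasDerivAt.comp_hasFDerivAt
        (f := fun z => a - Real.log ‖z‖) x
        (hasFDerivAt_const_sub_log_norm a hx)
    have d2 : HasFDerivAt (fun z : EuclideanSpace ℝ (Fin 4) => (‖z‖ ^ 2)⁻¹) _ x :=
      (hasDerivAt_inv hn).comp_hasFDerivAt x (hasStrictFDerivAt_norm_sq x).hasFDerivAt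
    have d3 : HasFDerivAt (fun z : EuclideanSpace ℝ (Fin 4) => z i) _ x :=
      (EuclideanSpace.proj i : EuclideanSpace ℝ (Fin 4) →L[ℝ] ℝ).hasFDerivAt
    have d := d1.mul (d2.neg.mul d3)
    rw [e.fderiv_eq]
    erw [d.fderiv]
    simp [EuclideanSpace.inner_single_right]
    field_simp
    ring
  have hs : ‖x‖ ^ 2 = x 0 ^ 2 + x 1 ^ 2 + x 2 ^ 2 + x 3 ^ 2 := by
    simp [EuclideanSpace.norm_sq_eq, Fin.sum_univ_four]
  unfold lap
  simp only [h2, Fin.sum_univ_four]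
  generalize ‖x‖ ^ 2 = N at *
  generalize deriv (deriv F) _ = X
  generalize deriv F _ = Y
  have e : ∀ p q r t : ℝ, X * (p / N ^ 2) + Y * (2 * p / N ^ 2 - 1 / N)
      + (X * (q / N ^ 2) + Y * (2 * q / N ^ 2 - 1 / N))
      + (X * (r / N ^ 2) + Y * (2 * r / N ^ 2 - 1 / N))
      + (X * (t / N ^ 2) + Y * (2 * t / N ^ 2 - 1 / N))
      = X * ((p + q + r + t) / N ^ 2) + Y * (2 * (p + q + r + t) / N ^ 2 - 4 / N) := by
    intros; ring
  rw [e, ← hs]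
  field_simp
  ring

/-- Polar coordinates followed by `r = exp (a - s)`, under which the unit ball becomes `s > a` and
`r³ dr / r⁴` becomes `ds`; `C` is the area of the unit sphere. -/
lemma exists_polar (a : ℝ) : ∃ C : ℝ, 0 ≤ C ∧ ∀ G : ℝ → ℝ, (∀ s ≤ a, G s = 0) →
    ∫ x in Metric.ball (0 : EuclideanSpace ℝ (Fin 4)) 1, G (a - Real.log ‖x‖) / ‖x‖ ^ 4
      = C * ∫ s, G s := by
  refine ⟨4 * (volume : Measure (EuclideanSpace ℝ (Fin 4))).real (Metric.ball 0 1), by positivity,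
    fun G hG => ?_⟩
  have h1 : ∫ x in Metric.ball (0 : EuclideanSpace ℝ (Fin 4)) 1, G (a - Real.log ‖x‖) / ‖x‖ ^ 4
      = ∫ x : EuclideanSpace ℝ (Fin 4), G (a - Real.log ‖x‖) / ‖x‖ ^ 4 := by
    refine setIntegral_eq_integral_of_forall_compl_eq_zero fun x hx => ?_
    have : 1 ≤ ‖x‖ := by simpa using hx
    rw [hG _ (by linarith [Real.log_nonneg this]), zero_div]
  have h2 : ∫ r in Set.Ioi (0 : ℝ), r ^ 3 * (G (a - Real.log r) / r ^ 4) = ∫ s, G s := by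
    have hi : (fun s => Real.exp (a - s)) '' Set.univ = Set.Ioi 0 := by
      ext r
      simp only [Set.image_univ, Set.mem_range, Set.mem_Ioi]
      refine ⟨?_, fun hr => ⟨a - Real.log r, by simp [Real.exp_log hr]⟩⟩
      rintro ⟨s, rfl⟩
      positivity
    have hd : ∀ s ∈ Set.univ, HasDerivWithinAt (fun s => Real.exp (a - s)) (-Real.exp (a - s))
        Set.univ s := fun s _ => by
      simpa using (((hasDerivAt_id' s).const_sub a).exp).hasDerivWithinAt (s := Set.univ)
    rw [← hi, integral_image_eq_integral_abs_deriv_smul MeasurableSet.univ hd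
      (fun s _ t _ h => by simpa using h), setIntegral_univ]
    refine integral_congr_ae (.of_forall fun s => ?_)
    have : Real.exp (a - s) ≠ 0 := (Real.exp_pos _).ne'
    simp only [abs_neg, abs_of_pos (Real.exp_pos _), Real.log_exp, smul_eq_mul, sub_sub_cancel]
    field_simp
  rw [h1, integral_fun_norm_addHaar volume (fun r => G (a - Real.log r) / r ^ 4)]
  simp only [finrank_euclideanSpace, Fintype.card_fin, smul_eq_mul, nsmul_eq_mul]
  norm_num
  rw [← h2]
  simp [mul_assoc]

/-- Radial ground state estimate on the unit ball with constant `2a/(2a+1)`, `a = 1 + ln R`. -/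
theorem stmt7 (R : ℝ) (hR : 1 ≤ R)
    (u : EuclideanSpace ℝ (Fin 4) → ℝ) (hsmooth : ContDiff ℝ (⊤ : ℕ∞) u)
    (hcpt : HasCompactSupport u)
    (hsupp : tsupport u ⊆ Metric.ball 0 1 \ {0}) (hrad : ∃ g : ℝ → ℝ, ∀ x, u x = g ‖x‖) :
    2 * (1 + Real.log R) / (2 * (1 + Real.log R) + 1) *
        ∫ x in Metric.ball (0 : EuclideanSpace ℝ (Fin 4)) 1, E1 (‖x‖ / R) *
          (lap (fun y => (E1 (‖y‖ / R)) ^ (-(1 / 2) : ℝ) * u y) x) ^ 2 ≤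
      (∫ x in Metric.ball (0 : EuclideanSpace ℝ (Fin 4)) 1, (lap u x) ^ 2) -
        ∫ x in Metric.ball (0 : EuclideanSpace ℝ (Fin 4)) 1,
          (u x) ^ 2 / (‖x‖ ^ 4 * (E1 (‖x‖ / R)) ^ 2) := by
  have hRp : 0 < R := by linarith
  obtain ⟨a, ha_def⟩ : ∃ a, a = 1 + Real.log R := ⟨_, rfl⟩
  have ha : 1 ≤ a := by rw [ha_def]; linarith [Real.log_nonneg hR]
  rw [← ha_def]
  have hE : ∀ y : EuclideanSpace ℝ (Fin 4), y ≠ 0 → E1 (‖y‖ / R) = a - Real.log ‖y‖ := by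
    intro y hy
    rw [E1, Real.log_div (norm_ne_zero_iff.2 hy) hRp.ne', ha_def]
    ring
  obtain ⟨g, hg⟩ := hrad
  -- the radial profile in the variable `s = a - log r`, read off along a coordinate axis
  let U : ℝ → ℝ := fun s => u (Real.exp (a - s) • EuclideanSpace.single 0 1)
  have hn : ∀ s, ‖Real.exp (a - s) • (EuclideanSpace.single 0 1 : EuclideanSpace ℝ (Fin 4))‖
      = Real.exp (a - s) := fun s => by
    simp [norm_smul]
  have hU : ContDiff ℝ (⊤ : ℕ∞) U := hsmooth.comp (by fun_prop)
  have huU : ∀ y, y ≠ 0 → u y = U (a - Real.log ‖y‖) := by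
    intro y hy
    simp only [U]
    rw [hg, hg (_ • _), hn, sub_sub_cancel, Real.exp_log (norm_pos_iff.2 hy)]
  let K : Set ℝ := (fun y => a - Real.log ‖y‖) '' tsupport u
  have hK : IsCompact K := by
    refine IsCompact.image_of_continuousOn hcpt fun y hy => ?_
    have : ‖y‖ ≠ 0 := norm_ne_zero_iff.2 (hsupp hy).2
    exact ContinuousAt.continuousWithinAt (by fun_prop (disch := assumption))
  have hKa : K ⊆ Set.Ioi a := by
    rintro _ ⟨y, hy, rfl⟩
    have h0 : 0 < ‖y‖ := norm_pos_iff.2 (hsupp hy).2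
    have h1 : ‖y‖ < 1 := by simpa using (hsupp hy).1
    have := Real.log_neg h0 h1
    simp only [Set.mem_Ioi]
    linarith
  have hU0 : ∀ s ∉ K, U s = 0 := by
    intro s hs
    by_contra h
    refine hs ⟨_, subset_tsupport u h, ?_⟩
    simp only [hn, Real.log_exp, sub_sub_cancel]
  let V : ℝ → ℝ := fun s => s ^ (-(1 / 2) : ℝ) * U s
  have hV0 : ∀ s ∉ K, V s = 0 := fun s hs => by simp [V, hU0 s hs]
  have hV : ContDiff ℝ (⊤ : ℕ∞) V := by
    rw [contDiff_iff_contDiffAt]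
    intro s
    by_cases hs : s ∈ K
    · have hs0 : s ≠ 0 := by
        have : a < s := hKa hs
        linarith
      exact (Real.contDiffAt_rpow_const_of_ne hs0).mul hU.contDiffAt
    · have : V =ᶠ[nhds s] fun _ => 0 :=
        Filter.eventually_of_mem (hK.isClosed.isOpen_compl.mem_nhds hs) hV0
      exact contDiffAt_const.congr_of_eventuallyEq this
  have hUV : ∀ s, 0 < s → U s = √s * V s := by
    intro s hs
    simp only [V]
    rw [Real.sqrt_eq_rpow, ← mul_assoc, ← Real.rpow_add hs]
    simp
  have h1D := oneD ha rfl hU hV hK hKa hV0 hU0 hUV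
  obtain ⟨C, hC, hpol⟩ := exists_polar a
  have hnotK : ∀ s ≤ a, s ∉ K := fun s hs h => absurd (hKa h) (by simpa using hs)
  have hder : ∀ W : ℝ → ℝ, (∀ s ∉ K, W s = 0) → ∀ s ∉ K, deriv W s = 0 := fun W hW s hs => by
    have : W =ᶠ[nhds s] fun _ => 0 :=
      Filter.eventually_of_mem (hK.isClosed.isOpen_compl.mem_nhds hs) hW
    rw [this.deriv_eq]; simp
  -- the logarithmic variable is meaningless at the origin, a null set
  have hae : ∀ᵐ x ∂(volume.restrict (Metric.ball (0 : EuclideanSpace ℝ (Fin 4)) 1)), x ≠ 0 :=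
    ae_restrict_of_ae (Measure.ae_ne volume 0)
  have e1 : ∫ x in Metric.ball (0 : EuclideanSpace ℝ (Fin 4)) 1, (lap u x) ^ 2
      = C * ∫ s, (deriv (deriv U) s - 2 * deriv U s) ^ 2 := by
    rw [← hpol _ fun s hs => by
      simp [hder U hU0 s (hnotK s hs), hder _ (hder U hU0) s (hnotK s hs)]]
    refine integral_congr_ae (hae.mono fun x hx => ?_)
    simp only
    rw [lap_comp_log a hU hx huU]
    ring
  have e2 : ∫ x in Metric.ball (0 : EuclideanSpace ℝ (Fin 4)) 1,
      (u x) ^ 2 / (‖x‖ ^ 4 * (E1 (‖x‖ / R)) ^ 2) = C * ∫ s, U s ^ 2 / s ^ 2 := by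
    rw [← hpol _ fun s hs => by simp [hU0 s (hnotK s hs)]]
    refine integral_congr_ae (hae.mono fun x hx => ?_)
    simp only
    rw [hE x hx, huU x hx, div_div, mul_comm (‖x‖ ^ 4)]
  have e3 : ∫ x in Metric.ball (0 : EuclideanSpace ℝ (Fin 4)) 1, E1 (‖x‖ / R) *
      (lap (fun y => (E1 (‖y‖ / R)) ^ (-(1 / 2) : ℝ) * u y) x) ^ 2
      = C * ∫ s, s * (deriv (deriv V) s - 2 * deriv V s) ^ 2 := by
    rw [← hpol _ fun s hs => by
      simp [hder V hV0 s (hnotK s hs), hder _ (hder V hV0) s (hnotK s hs)]]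
    refine integral_congr_ae (hae.mono fun x hx => ?_)
    simp only
    rw [lap_comp_log a hV hx fun y hy => by rw [hE y hy, huU y hy], hE x hx]
    ring
  rw [e1, e2, e3]
  have := mul_le_mul_of_nonneg_left h1D hC
  linarith
end
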